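/- arXiv:1701.08555 — 2 statements merged into one kernel-verified Lean document; each statement's English description precedes it below -/
import Mathlib

section
/- Fix r_1 < ... < r_k and n > r_k² with M_n primitive and minimally generated. If ρ is a minimal presentation of M_n, then Φ_n(ρ) is a minimal presentation of M_{n+r_k}, and Φ_n induces a bijection between the set of minimal presentations of M_n and the set of minimal presentations of M_{n+r_k}. -/
open Finset

/-- Length of a factorization. -/
def vlen {m : ℕ} (z : Fin m → ℕ) : ℕ := ∑ i, z i

/-- Factorization homomorphism of `M_n = ⟨n, n+r_1, ..., n+r_k⟩`. -/
def piM (k n : ℕ) (r : Fin (k + 1) → ℕ) (z : Fin (k + 2) → ℕ) : ℕ :=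
  z 0 * n + ∑ i : Fin (k + 1), z i.succ * (n + r i)

/-- Two factorizations of `β` lie in the same connected component of the factorization
graph `∇_β`: there is a path of factorizations of `β`, consecutive ones sharing a
common positive coordinate. -/
def SameComp {m : ℕ} (π : (Fin m → ℕ) → ℕ) (β : ℕ) :
    (Fin m → ℕ) → (Fin m → ℕ) → Prop :=
  Relation.ReflTransGen (fun a b => π a = β ∧ π b = β ∧ ∃ i, 0 < a i ∧ 0 < b i)

/-- `β` is a Betti element: its factorization graph is disconnected. -/
def IsBetti {m : ℕ} (π : (Fin m → ℕ) → ℕ) (β : ℕ) : Prop :=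
  ∃ z z', π z = β ∧ π z' = β ∧ ¬ SameComp π β z z'

/-- The map `Φ_n` on pairs of factorizations. -/
def Phi (k : ℕ) (p : (Fin (k + 2) → ℕ) × (Fin (k + 2) → ℕ)) :
    (Fin (k + 2) → ℕ) × (Fin (k + 2) → ℕ) :=
  if vlen p.2 < vlen p.1 then
    (p.1 + (vlen p.1 - vlen p.2) • Pi.single (0 : Fin (k + 2)) 1,
     p.2 + (vlen p.1 - vlen p.2) • Pi.single (Fin.last (k + 1)) 1)
  else if vlen p.1 < vlen p.2 then
    (p.1 + (vlen p.2 - vlen p.1) • Pi.single (Fin.last (k + 1)) 1,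
     p.2 + (vlen p.2 - vlen p.1) • Pi.single (0 : Fin (k + 2)) 1)
  else p

/-- The congruence generated by a set of relations `ρ`. -/
inductive CongGen {m : ℕ} (ρ : Set ((Fin m → ℕ) × (Fin m → ℕ))) :
    (Fin m → ℕ) → (Fin m → ℕ) → Prop
  | of {z z'} : (z, z') ∈ ρ → CongGen ρ z z'
  | refl (z) : CongGen ρ z z
  | symm {z z'} : CongGen ρ z z' → CongGen ρ z' z
  | trans {x y z} : CongGen ρ x y → CongGen ρ y z → CongGen ρ x z
  | add {z z'} (u) : CongGen ρ z z' → CongGen ρ (z + u) (z' + u)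

/-- `ρ` is a presentation for the monoid with factorization homomorphism `π`. -/
def IsPres {m : ℕ} (π : (Fin m → ℕ) → ℕ)
    (ρ : Set ((Fin m → ℕ) × (Fin m → ℕ))) : Prop :=
  (∀ p ∈ ρ, π p.1 = π p.2) ∧ ∀ z z', CongGen ρ z z' ↔ π z = π z'

/-- `ρ` is a minimal presentation. -/
def IsMinPres {m : ℕ} (π : (Fin m → ℕ) → ℕ)
    (ρ : Set ((Fin m → ℕ) × (Fin m → ℕ))) : Prop :=
  IsPres π ρ ∧ ∀ ρ' ⊆ ρ, IsPres π ρ' → ρ' = ρ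

/-- Primitivity of `M_n`: the gcd of the generators is 1. -/
def Primitive (k n : ℕ) (r : Fin (k + 1) → ℕ) : Prop :=
  Nat.gcd n (Finset.univ.gcd fun i : Fin (k + 1) => n + r i) = 1

/-- Distance between two factorizations. -/
def fdist {m : ℕ} (z z' : Fin m → ℕ) : ℕ :=
  max (∑ i, (z i - min (z i) (z' i))) (∑ i, (z' i - min (z i) (z' i)))


/-! ### Weights -/

/-- the shifts with the leading zero included -/
def rr (k : ℕ) (r : Fin (k + 1) → ℕ) : Fin (k + 2) → ℕ := Fin.cons 0 r

/-- the weight of a factorization -/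
def wt (k : ℕ) (r : Fin (k + 1) → ℕ) (z : Fin (k + 2) → ℕ) : ℕ := ∑ i, z i * rr k r i

/-- number of atoms different from the first and the last one -/
def inn (k : ℕ) (z : Fin (k + 2) → ℕ) : ℕ :=
  ∑ i, if i = 0 ∨ i = Fin.last (k + 1) then 0 else z i

lemma piM_eq (k n : ℕ) (r : Fin (k + 1) → ℕ) (z : Fin (k + 2) → ℕ) :
    piM k n r z = n * vlen z + wt k r z := by
  unfold piM vlen wt rr
  rw [Fin.sum_univ_succ z, Fin.sum_univ_succ (n := k + 1) (fun i => z i * _)]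
  simp only [Fin.cons_zero, Fin.cons_succ, mul_add, Finset.sum_add_distrib,
    mul_zero, zero_add, ← Finset.sum_mul]
  ring

lemma vlen_add {m : ℕ} (x y : Fin m → ℕ) : vlen (x + y) = vlen x + vlen y := by
  simp [vlen, Finset.sum_add_distrib]

lemma wt_add (k : ℕ) (r : Fin (k + 1) → ℕ) (x y : Fin (k + 2) → ℕ) :
    wt k r (x + y) = wt k r x + wt k r y := by
  simp [wt, Finset.sum_add_distrib, add_mul]

lemma vlen_ss {m : ℕ} (c : ℕ) (i : Fin m) : vlen (c • Pi.single i 1 : Fin m → ℕ) = c := by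
  simp [vlen, Pi.single_apply]

lemma wt_ss (k : ℕ) (r : Fin (k + 1) → ℕ) (c : ℕ) (i : Fin (k + 2)) :
    wt k r (c • Pi.single i 1) = c * rr k r i := by
  simp [wt, Pi.single_apply]

lemma piM_add (k n : ℕ) (r : Fin (k + 1) → ℕ) (x y : Fin (k + 2) → ℕ) :
    piM k n r (x + y) = piM k n r x + piM k n r y := by
  simp only [piM_eq, vlen_add, wt_add]; ring

lemma rr_zero (k : ℕ) (r : Fin (k + 1) → ℕ) : rr k r 0 = 0 := rfl

lemma rr_last (k : ℕ) (r : Fin (k + 1) → ℕ) :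
    rr k r (Fin.last (k + 1)) = r (Fin.last k) := by
  rw [← Fin.succ_last]; rfl

lemma rr_pos {k : ℕ} {r : Fin (k + 1) → ℕ} (hmono : StrictMono r) (hpos : 0 < r 0)
    {i : Fin (k + 2)} (h : i ≠ 0) : 0 < rr k r i := by
  obtain ⟨j, rfl⟩ := Fin.exists_succ_eq.2 h
  simp only [rr, Fin.cons_succ]
  exact lt_of_lt_of_le hpos (hmono.monotone (Fin.zero_le j))

lemma rr_lt {k : ℕ} {r : Fin (k + 1) → ℕ} (hmono : StrictMono r) (hpos : 0 < r 0)
    {i : Fin (k + 2)} (h : i ≠ Fin.last (k + 1)) : rr k r i < r (Fin.last k) := by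
  rcases Fin.eq_zero_or_eq_succ i with rfl | ⟨j, rfl⟩
  · exact lt_of_lt_of_le hpos (hmono.monotone (Fin.zero_le _))
  · simp only [rr, Fin.cons_succ]
    apply hmono
    rw [← Fin.succ_last] at h
    exact lt_of_le_of_ne (Fin.le_last j) (fun e => h (by rw [e]))

lemma vlen_split (k : ℕ) (z : Fin (k + 2) → ℕ) :
    vlen z = z 0 + z (Fin.last (k + 1)) + inn k z := by
  have h0 : (0 : Fin (k + 2)) ≠ Fin.last (k + 1) := (Fin.last_pos).ne
  have : ∀ i, z i = (if i = 0 then z i else 0) + (if i = Fin.last (k + 1) then z i else 0)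
      + (if i = 0 ∨ i = Fin.last (k + 1) then 0 else z i) := by
    intro i
    by_cases h1 : i = 0
    · subst h1; simp
    · by_cases h2 : i = Fin.last (k + 1) <;> simp [h1, h2]
  unfold vlen inn
  rw [Finset.sum_congr rfl (fun i _ => this i)]
  simp [Finset.sum_add_distrib]

lemma wt_bound {k : ℕ} {r : Fin (k + 1) → ℕ} (hmono : StrictMono r) (hpos : 0 < r 0)
    (z : Fin (k + 2) → ℕ) :
    wt k r z + inn k z ≤ r (Fin.last k) * z (Fin.last (k + 1)) + r (Fin.last k) * inn k z := by
  have e : r (Fin.last k) * z (Fin.last (k + 1)) =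
      ∑ i, if i = Fin.last (k + 1) then r (Fin.last k) * z i else 0 := by simp
  rw [e]
  unfold wt inn
  rw [Finset.mul_sum, ← Finset.sum_add_distrib, ← Finset.sum_add_distrib]
  apply Finset.sum_le_sum
  intro i _
  by_cases h1 : i = 0
  · subst h1; simp [rr_zero]
  · by_cases h2 : i = Fin.last (k + 1)
    · subst h2; simp [rr_last, mul_comm]
    · have := rr_lt hmono hpos h2
      simp only [h1, h2, or_self, if_false]
      nlinarith [Nat.zero_le (z i)]

lemma cowt_bound {k : ℕ} {r : Fin (k + 1) → ℕ} (hmono : StrictMono r) (hpos : 0 < r 0)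
    (z : Fin (k + 2) → ℕ) :
    r (Fin.last k) * vlen z + inn k z ≤
      wt k r z + r (Fin.last k) * z 0 + r (Fin.last k) * inn k z := by
  have e : r (Fin.last k) * z 0 =
      ∑ i : Fin (k + 2), if i = 0 then r (Fin.last k) * z i else 0 := by simp
  rw [e]
  unfold wt inn vlen
  rw [Finset.mul_sum, Finset.mul_sum, ← Finset.sum_add_distrib, ← Finset.sum_add_distrib,
    ← Finset.sum_add_distrib]
  apply Finset.sum_le_sum
  intro i _
  by_cases h1 : i = 0
  · subst h1; simp
  · by_cases h2 : i = Fin.last (k + 1)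
    · subst h2; simp [rr_last, mul_comm]
    · have := rr_pos hmono hpos h1
      simp only [h1, h2, or_self, if_false]
      nlinarith [Nat.zero_le (z i)]

lemma wt_le {k : ℕ} {r : Fin (k + 1) → ℕ} (hmono : StrictMono r) (hpos : 0 < r 0)
    (z : Fin (k + 2) → ℕ) : wt k r z ≤ r (Fin.last k) * vlen z := by
  have h1 := wt_bound hmono hpos z
  rw [vlen_split]
  nlinarith [Nat.zero_le (r (Fin.last k) * z 0)]

lemma last_ge {k n : ℕ} {r : Fin (k + 1) → ℕ} (hmono : StrictMono r) (hpos : 0 < r 0)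
    (hn : r (Fin.last k) ^ 2 < n) {z : Fin (k + 2) → ℕ} (hz : inn k z < r (Fin.last k))
    {t : ℕ} (ht : n * t ≤ wt k r z) : t ≤ z (Fin.last (k + 1)) := by
  have h1 := wt_bound hmono hpos z
  by_contra! hlt
  obtain ⟨d, rfl⟩ : ∃ d, t = z (Fin.last (k + 1)) + d + 1 := Nat.exists_eq_add_of_lt hlt
  generalize z (Fin.last (k + 1)) = x at *
  generalize r (Fin.last k) = R at *
  generalize inn k z = I at *
  have h2 : R * I ≤ R * R := Nat.mul_le_mul_left _ hz.le
  have h3 : R * x ≤ R * R * x := by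
    apply Nat.mul_le_mul_right; nlinarith
  have h4 : (R ^ 2 + 1) * (x + d + 1) ≤ n * (x + d + 1) := Nat.mul_le_mul_right _ hn
  nlinarith [Nat.zero_le (R * R * d)]

lemma zero_ge {k n : ℕ} {r : Fin (k + 1) → ℕ} (hmono : StrictMono r) (hpos : 0 < r 0)
    (hn : r (Fin.last k) ^ 2 < n) {z : Fin (k + 2) → ℕ} (hz : inn k z < r (Fin.last k))
    {t : ℕ} (ht : wt k r z + n * t ≤ r (Fin.last k) * vlen z) : t ≤ z 0 := by
  have h1 := cowt_bound hmono hpos z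
  by_contra! hlt
  obtain ⟨d, rfl⟩ : ∃ d, t = z 0 + d + 1 := Nat.exists_eq_add_of_lt hlt
  generalize z 0 = x at *
  generalize r (Fin.last k) = R at *
  generalize inn k z = I at *
  have h2 : R * I ≤ R * R := Nat.mul_le_mul_left _ hz.le
  have h3 : R * x ≤ R * R * x := by
    apply Nat.mul_le_mul_right; nlinarith
  have h4 : (R ^ 2 + 1) * (x + d + 1) ≤ n * (x + d + 1) := Nat.mul_le_mul_right _ hn
  nlinarith [Nat.zero_le (R * R * d)]

/-! ### Zero-sum reduction -/

lemma exists_chain {m : ℕ} : ∀ (N : ℕ) (x : Fin m → ℕ), vlen x = N →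
    ∃ f : ℕ → Fin m → ℕ, Monotone f ∧ (∀ j, f j ≤ x) ∧ ∀ j ≤ N, vlen (f j) = j := by
  intro N
  induction N with
  | zero =>
    intro x hx
    refine ⟨fun _ => x, fun _ _ _ => le_rfl, fun _ => le_rfl, ?_⟩
    intro j hj
    simp only [hx]; omega
  | succ N ih =>
    intro x hx
    obtain ⟨i, hi⟩ : ∃ i, 0 < x i := by
      by_contra! h
      have : vlen x = 0 := Finset.sum_eq_zero (fun i _ => Nat.le_zero.1 (h i))
      omega
    have hle : (Pi.single i 1 : Fin m → ℕ) ≤ x := by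
      intro j
      by_cases h : j = i
      · subst h; simpa using Nat.succ_le_of_lt hi
      · simp [h]
    obtain ⟨y, rfl⟩ : ∃ y : Fin m → ℕ, x = y + Pi.single i 1 := ⟨_, (tsub_add_cancel_of_le hle).symm⟩
    have hy : vlen y = N := by
      have := vlen_ss 1 i
      rw [one_smul] at this
      rw [vlen_add, this] at hx; omega
    obtain ⟨f, hf1, hf2, hf3⟩ := ih y hy
    have hyx : y ≤ y + Pi.single i 1 := le_self_add
    refine ⟨fun j => if j ≤ N then f j else y + Pi.single i 1, ?_, ?_, ?_⟩
    · intro a b hab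
      dsimp only
      by_cases hb : b ≤ N
      · rw [if_pos hb, if_pos (hab.trans hb)]; exact hf1 hab
      · rw [if_neg hb]
        split_ifs
        · exact (hf2 _).trans hyx
        · exact le_rfl
    · intro j
      dsimp only
      split_ifs
      · exact (hf2 _).trans hyx
      · exact le_rfl
    · intro j hj
      dsimp only
      split_ifs with h
      · exact hf3 j h
      · rw [hx]; omega

lemma exists_zero_sum {k : ℕ} {r : Fin (k + 1) → ℕ} (hmono : StrictMono r) (hpos : 0 < r 0)
    {z : Fin (k + 2) → ℕ} (hz : r (Fin.last k) ≤ inn k z) :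
    ∃ u v : Fin (k + 2) → ℕ, z = v + u ∧ vlen u ≤ r (Fin.last k) ∧ u 0 = 0 ∧
      u (Fin.last (k + 1)) = 0 ∧ ∃ c d, 0 < c ∧ 0 < d ∧ vlen u = c + d ∧
      wt k r u = c * r (Fin.last k) := by
  set x : Fin (k + 2) → ℕ := fun i => if i = 0 ∨ i = Fin.last (k + 1) then 0 else z i with hx
  have hxz : x ≤ z := by
    intro i; simp only [hx]; split_ifs <;> simp
  have hxl : vlen x = inn k z := rfl
  obtain ⟨f, hf1, hf2, hf3⟩ := exists_chain _ x rfl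
  have hR : 0 < r (Fin.last k) := lt_of_lt_of_le hpos (hmono.monotone (Fin.zero_le _))
  obtain ⟨a, ha, b, hb, hab, he⟩ : ∃ a ∈ Finset.range (r (Fin.last k) + 1),
      ∃ b ∈ Finset.range (r (Fin.last k) + 1), a ≠ b ∧
        wt k r (f a) % r (Fin.last k) = wt k r (f b) % r (Fin.last k) := by
    apply Finset.exists_ne_map_eq_of_card_lt_of_maps_to (t := Finset.range (r (Fin.last k)))
    · simp
    · intro a _
      simpa using Nat.mod_lt _ hR
  wlog hlt : a < b generalizing a b
  · exact this b hb a ha hab.symm he.symm (by omega)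
  simp only [Finset.mem_range] at ha hb
  obtain ⟨u, hu⟩ : ∃ u, f b = f a + u := ⟨_, (add_tsub_cancel_of_le (hf1 hlt.le)).symm⟩
  have hux : u ≤ x := le_trans (by rw [hu]; exact le_add_self) (hf2 b)
  have hla := hf3 a (by omega)
  have hlb := hf3 b (by omega)
  rw [hu, vlen_add] at hlb
  have hu0 : u 0 = 0 := by simpa [hx] using hux 0
  have hul : u (Fin.last (k + 1)) = 0 := by simpa [hx] using hux (Fin.last (k + 1))
  rw [hu, wt_add] at he
  have hdvd : r (Fin.last k) ∣ wt k r u := by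
    have : wt k r (f a) + 0 ≡ wt k r (f a) + wt k r u [MOD r (Fin.last k)] := he
    exact (Nat.modEq_zero_iff_dvd.1 (Nat.ModEq.add_left_cancel' _ this).symm)
  obtain ⟨c, hc⟩ := hdvd
  have hs := vlen_split k u
  have h1 := wt_bound hmono hpos u
  have h2 := cowt_bound hmono hpos u
  rw [hu0, hul] at hs
  rw [hul] at h1
  rw [hu0] at h2
  have hI : 0 < inn k u := by omega
  have hvI : vlen u = inn k u := by omega
  have hc0 : 0 < c := by
    rcases Nat.eq_zero_or_pos c with rfl | h
    · rw [hc, hvI] at h2; omega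
    · exact h
  have hcd : c < vlen u := by
    rw [hc] at h1
    rw [hvI]
    by_contra! h
    have := Nat.mul_le_mul_left (r (Fin.last k)) h
    omega
  exact ⟨u, z - u, (tsub_add_cancel_of_le (hux.trans hxz)).symm, by omega, hu0, hul, c,
    vlen u - c, hc0, by omega, by omega, by rw [hc, mul_comm]⟩

/-- homogeneous equivalence -/
def Heq' (k : ℕ) (r : Fin (k + 1) → ℕ) (x y : Fin (k + 2) → ℕ) : Prop :=
  vlen x = vlen y ∧ wt k r x = wt k r y

lemma inn_add (k : ℕ) (x y : Fin (k + 2) → ℕ) : inn k (x + y) = inn k x + inn k y := by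
  unfold inn
  rw [← Finset.sum_add_distrib]
  apply Finset.sum_congr rfl
  intro i _
  split_ifs <;> simp

lemma inn_s0 (k c : ℕ) : inn k (c • Pi.single 0 1) = 0 := by
  unfold inn
  apply Finset.sum_eq_zero
  intro i _
  split_ifs with h
  · rfl
  · push Not at h
    simp [h.1]

lemma inn_sl (k c : ℕ) : inn k (c • Pi.single (Fin.last (k + 1)) 1) = 0 := by
  unfold inn
  apply Finset.sum_eq_zero
  intro i _
  split_ifs with h
  · rfl
  · push Not at h
    simp [h.2]

lemma exists_pos_of_vlen {m : ℕ} {x : Fin m → ℕ} (h : 0 < vlen x) : ∃ i, 0 < x i := by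
  by_contra! h'
  have : vlen x = 0 := Finset.sum_eq_zero (fun i _ => Nat.le_zero.1 (h' i))
  omega

lemma red_step {k : ℕ} {r : Fin (k + 1) → ℕ} (hmono : StrictMono r) (hpos : 0 < r 0)
    {z : Fin (k + 2) → ℕ} (hz : r (Fin.last k) ≤ inn k z) :
    ∃ y, Heq' k r z y ∧ 0 < y 0 ∧ 0 < y (Fin.last (k + 1)) ∧ inn k y < inn k z ∧
      (r (Fin.last k) < vlen z → ∃ i, 0 < z i ∧ 0 < y i) := by
  obtain ⟨u, v, rfl, hu, hu0, hul, c, d, hc, hd, hcd, hw⟩ := exists_zero_sum hmono hpos hz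
  refine ⟨v + (d • Pi.single 0 1 + c • Pi.single (Fin.last (k + 1)) 1), ⟨?_, ?_⟩, ?_, ?_, ?_, ?_⟩
  · simp only [vlen_add, vlen_ss]; omega
  · simp only [wt_add, wt_ss, rr_zero, rr_last, hw]; ring
  · simp; omega
  · simp; omega
  · simp only [inn_add, inn_s0, inn_sl]
    have := vlen_split k u
    omega
  · intro h
    rw [vlen_add] at h
    obtain ⟨i, hi⟩ := exists_pos_of_vlen (x := v) (by omega)
    exact ⟨i, by simp; omega, by simp only [Pi.add_apply]; omega⟩

lemma exists_red {k : ℕ} {r : Fin (k + 1) → ℕ} (hmono : StrictMono r) (hpos : 0 < r 0) :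
    ∀ (N : ℕ) (z : Fin (k + 2) → ℕ), inn k z = N → ∃ y, Heq' k r z y ∧
      inn k y < r (Fin.last k) := by
  intro N
  induction N using Nat.strong_induction_on with
  | _ N ih =>
    intro z hz
    by_cases h : inn k z < r (Fin.last k)
    · exact ⟨z, ⟨rfl, rfl⟩, h⟩
    · obtain ⟨y, hy, _, _, hlt, _⟩ := red_step hmono hpos (not_lt.1 h)
      obtain ⟨x, hx, hx'⟩ := ih _ (hz ▸ hlt) y rfl
      exact ⟨x, ⟨hy.1.trans hx.1, hy.2.trans hx.2⟩, hx'⟩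

lemma strip {k n : ℕ} {r : Fin (k + 1) → ℕ} (hmono : StrictMono r) (hpos : 0 < r 0)
    (hn : r (Fin.last k) ^ 2 < n) (y : Fin (k + 2) → ℕ) {p q : ℕ} (hp : n * p ≤ wt k r y)
    (hq : wt k r y + n * q ≤ r (Fin.last k) * vlen y) :
    ∃ x, vlen x + p + q = vlen y ∧ wt k r x + r (Fin.last k) * p = wt k r y := by
  obtain ⟨z, hz, hzi⟩ := exists_red hmono hpos _ y rfl
  rw [hz.2] at hp
  rw [hz.1, hz.2] at hq
  have h1 := last_ge hmono hpos hn hzi hp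
  have h2 := zero_ge hmono hpos hn hzi hq
  have hle : (q • Pi.single 0 1 + p • Pi.single (Fin.last (k + 1)) 1 : Fin (k + 2) → ℕ) ≤ z := by
    have h0 : (0 : Fin (k + 2)) ≠ Fin.last (k + 1) := (Fin.last_pos).ne
    intro i
    by_cases hi : i = 0
    · subst hi; simpa [h0] using h2
    · by_cases hi' : i = Fin.last (k + 1)
      · subst hi'; simpa [h0.symm] using h1
      · simp [hi, hi']
  obtain ⟨x, rfl⟩ : ∃ x : Fin (k + 2) → ℕ, z = x + _ := ⟨_, (tsub_add_cancel_of_le hle).symm⟩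
  refine ⟨x, ?_, ?_⟩
  · rw [hz.1]; simp only [vlen_add, vlen_ss]; omega
  · rw [hz.2]; simp only [wt_add, wt_ss, rr_zero, rr_last]; ring

lemma long_short {k n : ℕ} {r : Fin (k + 1) → ℕ} {z x : Fin (k + 2) → ℕ}
    (h : piM k n r z = piM k n r x) (hl : vlen x < vlen z) :
    ∃ l, 0 < l ∧ vlen z = vlen x + l ∧ wt k r x = wt k r z + n * l := by
  refine ⟨vlen z - vlen x, by omega, by omega, ?_⟩
  obtain ⟨l, hl⟩ := Nat.exists_eq_add_of_lt hl
  rw [piM_eq, piM_eq, hl] at h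
  have : vlen z - vlen x = l + 1 := by omega
  rw [this]
  nlinarith

lemma short_len {k n : ℕ} {r : Fin (k + 1) → ℕ} (hmono : StrictMono r) (hpos : 0 < r 0)
    (hn : r (Fin.last k) ^ 2 < n) {x : Fin (k + 2) → ℕ} {l : ℕ} (hl : 0 < l)
    (h : n * l ≤ wt k r x) : r (Fin.last k) * l < vlen x := by
  have h1 := wt_le hmono hpos x
  by_contra! h2
  have h3 := Nat.mul_le_mul_left (r (Fin.last k)) h2
  have h4 : r (Fin.last k) ^ 2 * l < n * l := Nat.mul_lt_mul_of_pos_right hn hl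
  nlinarith

lemma has_last {k n : ℕ} {r : Fin (k + 1) → ℕ} (hmono : StrictMono r) (hpos : 0 < r 0)
    (hn : r (Fin.last k) ^ 2 < n) {z x : Fin (k + 2) → ℕ}
    (h : piM k n r z = piM k n r x) (hl : vlen z < vlen x) :
    ∃ y, Heq' k r z y ∧ 0 < y (Fin.last (k + 1)) ∧ ∃ i, 0 < z i ∧ 0 < y i := by
  obtain ⟨l, hl0, hl1, hl2⟩ := long_short h.symm hl
  by_cases hi : inn k z < r (Fin.last k)
  · have := last_ge hmono hpos hn hi (t := l) (by omega)
    exact ⟨z, ⟨rfl, rfl⟩, by omega, _, lt_of_lt_of_le hl0 this, lt_of_lt_of_le hl0 this⟩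
  · obtain ⟨y, hy, _, h2, _, h3⟩ := red_step hmono hpos (not_lt.1 hi)
    refine ⟨y, hy, h2, h3 ?_⟩
    have := short_len hmono hpos hn (x := z) hl0 (by omega)
    nlinarith

lemma has_zero {k n : ℕ} {r : Fin (k + 1) → ℕ} (hmono : StrictMono r) (hpos : 0 < r 0)
    (hn : r (Fin.last k) ^ 2 < n) {z x : Fin (k + 2) → ℕ}
    (h : piM k n r z = piM k n r x) (hl : vlen x < vlen z) :
    ∃ y, Heq' k r z y ∧ 0 < y 0 ∧ ∃ i, 0 < z i ∧ 0 < y i := by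
  obtain ⟨l, hl0, hl1, hl2⟩ := long_short h hl
  by_cases hi : inn k z < r (Fin.last k)
  · have hw := wt_le hmono hpos x
    have := zero_ge hmono hpos hn hi (t := l) (by rw [hl1, mul_add]; omega)
    exact ⟨z, ⟨rfl, rfl⟩, by omega, _, lt_of_lt_of_le hl0 this, lt_of_lt_of_le hl0 this⟩
  · obtain ⟨y, hy, h1, h2, _, h3⟩ := red_step hmono hpos (not_lt.1 hi)
    refine ⟨y, hy, h1, h3 ?_⟩
    have := short_len hmono hpos hn (x := x) hl0 (by omega)
    nlinarith

/-! ### Nonhomogeneous Betti types -/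

/-- type `(s, l, w)` of a nonhomogeneous Betti element -/
def NHB (k n : ℕ) (r : Fin (k + 1) → ℕ) (s l w : ℕ) : Prop :=
  0 < l ∧ (∃ a : Fin (k + 2) → ℕ, vlen a = s + l ∧ wt k r a = w) ∧
  (∃ b : Fin (k + 2) → ℕ, vlen b = s ∧ wt k r b = w + n * l) ∧
  (∀ a b : Fin (k + 2) → ℕ, vlen a = s + l → wt k r a = w → vlen b = s →
    wt k r b = w + n * l → ∀ i, 0 < a i → 0 < b i → False) ∧
  (∀ (c : Fin (k + 2) → ℕ) (t : ℕ), 0 < t → t < l → vlen c + t = s + l →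
    wt k r c = w + n * t → False)

lemma exists_sub_single {m : ℕ} {x : Fin m → ℕ} {i : Fin m} (hi : 0 < x i) :
    ∃ y : Fin m → ℕ, x = y + 1 • Pi.single i 1 := by
  refine ⟨_, (tsub_add_cancel_of_le (?_ : _ ≤ x)).symm⟩
  intro j
  by_cases h : j = i
  · subst h; simpa using Nat.succ_le_of_lt hi
  · simp [h]

lemma NHB_shift {k n : ℕ} {r : Fin (k + 1) → ℕ} (hmono : StrictMono r) (hpos : 0 < r 0)
    (hn : r (Fin.last k) ^ 2 < n) (s l w : ℕ) :
    NHB k n r s l w ↔ NHB k (n + r (Fin.last k)) r (s + l) l w := by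
  have hn' : r (Fin.last k) ^ 2 < n + r (Fin.last k) := by omega
  constructor
  · rintro ⟨hl, ⟨a, ha, ha'⟩, ⟨b, hb, hb'⟩, h1, h2⟩
    refine ⟨hl, ⟨a + l • Pi.single 0 1, ?_, ?_⟩, ⟨b + l • Pi.single (Fin.last (k + 1)) 1, ?_, ?_⟩,
      ?_, ?_⟩
    · simp only [vlen_add, vlen_ss, ha]
    · simp only [wt_add, wt_ss, rr_zero, ha']; omega
    · simp only [vlen_add, vlen_ss, hb]
    · simp only [wt_add, wt_ss, rr_last, hb']; ring
    · intro a' b' e1 e2 e3 e4 i hi1 hi2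
      obtain ⟨x, rfl⟩ := exists_sub_single hi1
      obtain ⟨y, rfl⟩ := exists_sub_single hi2
      simp only [vlen_add, vlen_ss, wt_add, wt_ss, add_mul] at e1 e2 e3 e4
      have hwy := wt_le hmono hpos y
      have hwx := wt_le hmono hpos x
      have hxy : vlen x = vlen y + l := by omega
      obtain ⟨x', hx1, hx2⟩ := strip hmono hpos hn x (p := 0) (q := l) (by simp) (by
        rw [hxy, mul_add]; omega)
      obtain ⟨y', hy1, hy2⟩ := strip hmono hpos hn y (p := l) (q := 0) (by omega) (by simpa)
      refine h1 (x' + 1 • Pi.single i 1) (y' + 1 • Pi.single i 1) ?_ ?_ ?_ ?_ i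
        (by simp) (by simp)
      · simp only [vlen_add, vlen_ss]; omega
      · simp only [wt_add, wt_ss]; omega
      · simp only [vlen_add, vlen_ss]; omega
      · simp only [wt_add, wt_ss]; omega
    · intro c t ht htl e1 e2
      have hwb := wt_le hmono hpos b
      obtain ⟨q, rfl⟩ : ∃ q, l = t + q := ⟨_, (Nat.add_sub_of_le htl.le).symm⟩
      have hcl : vlen c = vlen b + t + (q + q) := by omega
      simp only [add_mul, mul_add] at e2 hb' hwb
      obtain ⟨c', hc1, hc2⟩ := strip hmono hpos hn c (p := t) (q := q) (by omega) (by
        rw [hcl]; simp only [mul_add]; omega)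
      exact h2 c' t ht htl (by omega) (by omega)
  · rintro ⟨hl, ⟨a, ha, ha'⟩, ⟨b, hb, hb'⟩, h1, h2⟩
    have hwb := wt_le hmono hpos b
    refine ⟨hl, ?_, ?_, ?_, ?_⟩
    · obtain ⟨x', hx1, hx2⟩ := strip hmono hpos hn a (p := 0) (q := l) (by simp) (by
        rw [ha, mul_add]; rw [hb, hb', add_mul] at hwb; omega)
      exact ⟨x', by omega, by omega⟩
    · rw [add_mul] at hb'
      obtain ⟨y', hy1, hy2⟩ := strip hmono hpos hn b (p := l) (q := 0) (by omega) (by simpa)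
      exact ⟨y', by omega, by omega⟩
    · intro a' b' e1 e2 e3 e4 i hi1 hi2
      refine h1 (a' + l • Pi.single 0 1) (b' + l • Pi.single (Fin.last (k + 1)) 1) ?_ ?_ ?_ ?_ i
        (by rw [Pi.add_apply]; omega) (by rw [Pi.add_apply]; omega)
      · simp only [vlen_add, vlen_ss, e1]
      · simp only [wt_add, wt_ss, rr_zero, e2]; omega
      · simp only [vlen_add, vlen_ss, e3]
      · simp only [wt_add, wt_ss, rr_last, e4]; ring
    · intro c t ht htl e1 e2
      refine h2 (c + (t • Pi.single (Fin.last (k + 1)) 1 + (l - t) • Pi.single 0 1)) t ht htl ?_ ?_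
      · simp only [vlen_add, vlen_ss]; omega
      · simp only [wt_add, wt_ss, rr_last, rr_zero, e2]; ring

/-! ### Criterion -/

lemma CongGen.le_of {m : ℕ} {ρ : Set ((Fin m → ℕ) × (Fin m → ℕ))}
    {E : (Fin m → ℕ) → (Fin m → ℕ) → Prop} (hr : ∀ x, E x x) (hs : ∀ x y, E x y → E y x)
    (ht : ∀ x y z, E x y → E y z → E x z) (h : ∀ a b u, (a, b) ∈ ρ → E (a + u) (b + u))
    {x y : Fin m → ℕ} (hxy : CongGen ρ x y) : E x y := by
  have : ∀ u, E (x + u) (y + u) := by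
    induction hxy with
    | of hm => exact fun u => h _ _ u hm
    | refl z => exact fun u => hr _
    | symm _ ih => exact fun u => hs _ _ (ih u)
    | trans _ _ ih1 ih2 => exact fun u => ht _ _ _ (ih1 u) (ih2 u)
    | add v _ ih => intro u; rw [add_assoc, add_assoc]; exact ih _
  simpa using this 0

/-- homogeneous part -/
def hpart {m : ℕ} (ρ : Set ((Fin m → ℕ) × (Fin m → ℕ))) : Set ((Fin m → ℕ) × (Fin m → ℕ)) :=
  {p ∈ ρ | vlen p.1 = vlen p.2}

/-- the homogeneous part generates the homogeneous congruence -/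
def GenH (k : ℕ) (r : Fin (k + 1) → ℕ) (ρ : Set ((Fin (k + 2) → ℕ) × (Fin (k + 2) → ℕ))) : Prop :=
  ∀ x y, Heq' k r x y → CongGen (hpart ρ) x y

/-- all nonhomogeneous Betti types occur -/
def Cover (k n : ℕ) (r : Fin (k + 1) → ℕ) (ρ : Set ((Fin (k + 2) → ℕ) × (Fin (k + 2) → ℕ))) :
    Prop :=
  ∀ s l w, NHB k n r s l w → ∃ a b, ((a, b) ∈ ρ ∨ (b, a) ∈ ρ) ∧ vlen a = s + l ∧
    wt k r a = w ∧ vlen b = s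

lemma CongGen.mono {m : ℕ} {ρ σ : Set ((Fin m → ℕ) × (Fin m → ℕ))} (h : ρ ⊆ σ)
    {x y : Fin m → ℕ} (hxy : CongGen ρ x y) : CongGen σ x y := by
  induction hxy with
  | of hm => exact .of (h hm)
  | refl z => exact .refl z
  | symm _ ih => exact .symm ih
  | trans _ _ ih1 ih2 => exact .trans ih1 ih2
  | add v _ ih => exact .add v ih

lemma congGen_ker {k n : ℕ} {r : Fin (k + 1) → ℕ}
    {ρ : Set ((Fin (k + 2) → ℕ) × (Fin (k + 2) → ℕ))}
    (hk : ∀ p ∈ ρ, piM k n r p.1 = piM k n r p.2) {x y} (h : CongGen ρ x y) :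
    piM k n r x = piM k n r y := by
  refine CongGen.le_of (E := fun x y => piM k n r x = piM k n r y) (fun _ => rfl)
    (fun _ _ h => h.symm) (fun _ _ _ h h' => h.trans h') ?_ h
  intro a b u hab
  simp only [piM_add]
  rw [hk _ hab]

lemma pres_of {k n : ℕ} {r : Fin (k + 1) → ℕ} (hn0 : 0 < n)
    {ρ : Set ((Fin (k + 2) → ℕ) × (Fin (k + 2) → ℕ))}
    (hk : ∀ p ∈ ρ, piM k n r p.1 = piM k n r p.2) (hH : GenH k r ρ) (hC : Cover k n r ρ) :
    IsPres (piM k n r) ρ := by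
  have hH' : ∀ x y, Heq' k r x y → CongGen ρ x y := fun x y h =>
    (hH x y h).mono (fun p hp => hp.1)
  refine ⟨hk, fun z z' => ⟨congGen_ker hk, ?_⟩⟩
  have main : ∀ (β l : ℕ) (z z' : Fin (k + 2) → ℕ), piM k n r z = β → piM k n r z' = β →
      vlen z = vlen z' + l → CongGen ρ z z' := by
    intro β
    induction β using Nat.strong_induction_on with
    | _ β ihβ =>
    intro l
    induction l using Nat.strong_induction_on with
    | _ l ihl =>
    intro z z' hz hz' hl
    have hw : wt k r z' = wt k r z + n * l := by
      have := hz.trans hz'.symm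
      rw [piM_eq, piM_eq, hl, mul_add] at this
      omega
    rcases Nat.eq_zero_or_pos l with rfl | hl0
    · exact hH' _ _ ⟨hl, by simpa using hw.symm⟩
    by_cases hN : NHB k n r (vlen z') l (wt k r z)
    · obtain ⟨a, b, hab, ha, ha', hb⟩ := hC _ _ _ hN
      have hpi : piM k n r a = piM k n r b := by
        rcases hab with h | h
        · exact hk _ h
        · exact (hk _ h).symm
      have hab' : CongGen ρ a b := by
        rcases hab with h | h
        · exact .of h
        · exact .symm (.of h)
      have hb' : wt k r b = wt k r z' := by
        rw [piM_eq, piM_eq, ha, hb, mul_add] at hpi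
        omega
      exact .trans (hH' z a ⟨by omega, ha'.symm⟩) (.trans hab' (hH' b z' ⟨hb, hb'⟩))
    · by_cases hsh : ∃ a b : Fin (k + 2) → ℕ, vlen a = vlen z' + l ∧ wt k r a = wt k r z ∧
        vlen b = vlen z' ∧ wt k r b = wt k r z + n * l ∧ ∃ i, 0 < a i ∧ 0 < b i
      · obtain ⟨a, b, ha, ha', hb, hb', i, hi1, hi2⟩ := hsh
        have h1 := hH' z a ⟨by omega, ha'.symm⟩
        have h2 := hH' b z' ⟨hb, by omega⟩
        refine .trans h1 (.trans ?_ h2)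
        have e1 : piM k n r a = β := by rw [← hz, piM_eq, piM_eq, ha, ha', hl]
        have e2 : piM k n r b = β := by rw [← hz', piM_eq, piM_eq, hb, hb', hw]
        obtain ⟨x, rfl⟩ := exists_sub_single hi1
        obtain ⟨y, rfl⟩ := exists_sub_single hi2
        have hpp : 0 < piM k n r (1 • Pi.single i 1) := by
          rw [piM_eq, vlen_ss]; omega
        rw [piM_add] at e1 e2
        rw [vlen_add, vlen_ss] at ha hb
        exact .add _ (ihβ (piM k n r x) (by omega) l x y rfl (by omega) (by omega))
      · have : ∃ (c : Fin (k + 2) → ℕ) (t : ℕ), 0 < t ∧ t < l ∧ vlen c + t = vlen z' + l ∧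
            wt k r c = wt k r z + n * t := by
          by_contra! hno
          apply hN
          refine ⟨hl0, ⟨z, hl, rfl⟩, ⟨z', rfl, hw⟩, ?_, ?_⟩
          · intro a b h1 h2 h3 h4 i h5 h6
            exact hsh ⟨a, b, h1, h2, h3, h4, i, h5, h6⟩
          · intro c t h1 h2 h3 h4
            exact hno c t h1 h2 h3 h4
        obtain ⟨c, t, h1, h2, h3, h4⟩ := this
        have hc : piM k n r c = β := by
          rw [← hz, piM_eq, piM_eq, h4]
          have : vlen z = vlen c + t := by omega
          rw [this]; ring
        exact .trans (ihl t h2 z c hz hc (by omega)) (ihl (l - t) (by omega) c z' hc hz' (by omega))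
  intro h
  rcases le_total (vlen z') (vlen z) with hle | hle
  · exact main _ (vlen z - vlen z') z z' rfl h.symm (by omega)
  · exact .symm (main _ (vlen z' - vlen z) z' z rfl h (by omega))

lemma genH_of {k n : ℕ} {r : Fin (k + 1) → ℕ} (hmono : StrictMono r) (hpos : 0 < r 0)
    (hn : r (Fin.last k) ^ 2 < n) {ρ : Set ((Fin (k + 2) → ℕ) × (Fin (k + 2) → ℕ))}
    (hP : IsPres (piM k n r) ρ) : GenH k r ρ := by
  have main : ∀ (L : ℕ) (x y : Fin (k + 2) → ℕ), vlen x = L → Heq' k r x y →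
      CongGen (hpart ρ) x y := by
    intro L
    induction L with
    | zero =>
      intro x y hx hxy
      have : ∀ v : Fin (k + 2) → ℕ, vlen v = 0 → v = 0 := by
        intro v hv
        by_contra hne
        obtain ⟨i, hi⟩ := Function.ne_iff.1 hne
        have := Finset.single_le_sum (f := v) (fun _ _ => Nat.zero_le _) (Finset.mem_univ i)
        unfold vlen at hv
        simp at hi
        omega
      rw [this x hx, this y (hxy.1 ▸ hx)]
      exact .refl _
    | succ L ih =>
      intro x y hx hxy
      have share : ∀ x y : Fin (k + 2) → ℕ, vlen x = L + 1 → Heq' k r x y → ∀ i, 0 < x i → 0 < y i →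
          CongGen (hpart ρ) x y := by
        intro x y hx hxy i hi1 hi2
        obtain ⟨x, rfl⟩ := exists_sub_single hi1
        obtain ⟨y, rfl⟩ := exists_sub_single hi2
        obtain ⟨h1, h2⟩ := hxy
        simp only [vlen_add, vlen_ss, wt_add] at h1 h2 hx
        exact .add _ (ih x y (by omega) ⟨by omega, by omega⟩)
      have hpi : ∀ x y : Fin (k + 2) → ℕ, Heq' k r x y → piM k n r x = piM k n r y := by
        intro x y h; rw [piM_eq, piM_eq, h.1, h.2]
      have viaj : ∀ (j : Fin (k + 2)) (x' y' : Fin (k + 2) → ℕ), Heq' k r x x' → Heq' k r y y' →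
          0 < x' j → 0 < y' j → (∃ i, 0 < x i ∧ 0 < x' i) → (∃ i, 0 < y i ∧ 0 < y' i) →
          CongGen (hpart ρ) x y := by
        rintro j x' y' h1 h2 h3 h4 ⟨i, hi1, hi2⟩ ⟨i', hi1', hi2'⟩
        refine .trans (share x x' hx h1 i hi1 hi2) (.trans (share x' y' ?_ ?_ j h3 h4)
          (.symm (share y y' ?_ h2 i' hi1' hi2')))
        · rw [← h1.1, hx]
        · exact ⟨h1.1.symm.trans (hxy.1.trans h2.1), h1.2.symm.trans (hxy.2.trans h2.2)⟩
        · rw [← hxy.1, hx]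
      by_cases hA : ∃ z, piM k n r z = piM k n r x ∧ vlen x < vlen z
      · obtain ⟨z, hz, hlt⟩ := hA
        obtain ⟨x', h1, h2, h3⟩ := has_last hmono hpos hn hz.symm hlt
        obtain ⟨y', h1', h2', h3'⟩ := has_last hmono hpos hn
          ((hpi x y hxy).symm.trans hz.symm) (hxy.1 ▸ hlt)
        exact viaj _ x' y' h1 h1' h2 h2' h3 h3'
      by_cases hB : ∃ z, piM k n r z = piM k n r x ∧ vlen z < vlen x
      · obtain ⟨z, hz, hlt⟩ := hB
        obtain ⟨x', h1, h2, h3⟩ := has_zero hmono hpos hn hz.symm hlt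
        obtain ⟨y', h1', h2', h3'⟩ := has_zero hmono hpos hn
          ((hpi x y hxy).symm.trans hz.symm) (hxy.1 ▸ hlt)
        exact viaj _ x' y' h1 h1' h2 h2' h3 h3'
      have hlen : ∀ z, piM k n r z = piM k n r x → vlen z = vlen x := by
        intro z hz
        by_contra hne
        rcases lt_or_gt_of_ne hne with h | h
        · exact hB ⟨z, hz, h⟩
        · exact hA ⟨z, hz, h⟩
      have key := CongGen.le_of (E := fun a b => piM k n r a = piM k n r b ∧
        (piM k n r a = piM k n r x → CongGen (hpart ρ) a b)) (fun a => ⟨rfl, fun _ => .refl a⟩)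
        (fun a b h => ⟨h.1.symm, fun e => .symm (h.2 (h.1.trans e))⟩)
        (fun a b c h h' => ⟨h.1.trans h'.1, fun e => .trans (h.2 e) (h'.2 (h.1.symm.trans e))⟩)
        ?_ ((hP.2 x y).2 (hpi x y hxy))
      · exact key.2 rfl
      · intro a b u hab
        have e : piM k n r (a + u) = piM k n r (b + u) := by
          rw [piM_add, piM_add, hP.1 _ hab]
        refine ⟨e, fun h => .add u (.of ⟨hab, ?_⟩)⟩
        have h1 := hlen _ h
        have h2 := hlen _ (e.symm.trans h)
        rw [vlen_add] at h1 h2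
        show vlen a = vlen b
        omega
  exact fun x y h => main _ x y rfl h

lemma cover_of {k n : ℕ} {r : Fin (k + 1) → ℕ} (hmono : StrictMono r) (hpos : 0 < r 0)
    (hn : r (Fin.last k) ^ 2 < n) {ρ : Set ((Fin (k + 2) → ℕ) × (Fin (k + 2) → ℕ))}
    (hP : IsPres (piM k n r) ρ) : Cover k n r ρ := by
  rintro s l w ⟨hl, ⟨z, hz, hz'⟩, ⟨y, hy, hy'⟩, h1, h2⟩
  by_contra! hno
  have hzy : piM k n r z = piM k n r y := by
    rw [piM_eq, piM_eq, hz, hz', hy, hy']; ring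
  have nolong : ∀ x, piM k n r x = piM k n r z → vlen x ≤ s + l := by
    intro x hx
    by_contra! hlt
    obtain ⟨a, ha, ha', _⟩ := has_last hmono hpos hn (z := z) hx.symm (by omega)
    obtain ⟨b, hb, hb', _⟩ := has_last hmono hpos hn (z := y) (hx.trans hzy).symm (by omega)
    exact h1 a b (by rw [← ha.1, hz]) (by rw [← ha.2, hz']) (by rw [← hb.1, hy])
      (by rw [← hb.2, hy']) _ ha' hb'
  have noshort : ∀ x, piM k n r x = piM k n r z → s ≤ vlen x := by
    intro x hx
    by_contra! hlt
    obtain ⟨a, ha, ha', _⟩ := has_zero hmono hpos hn (z := z) hx.symm (by omega)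
    obtain ⟨b, hb, hb', _⟩ := has_zero hmono hpos hn (z := y) (hx.trans hzy).symm (by omega)
    exact h1 a b (by rw [← ha.1, hz]) (by rw [← ha.2, hz']) (by rw [← hb.1, hy])
      (by rw [← hb.2, hy']) _ ha' hb'
  have wts : ∀ x t, piM k n r x = piM k n r z → vlen x + t = s + l → wt k r x = w + n * t := by
    intro x t hx ht
    rw [piM_eq, piM_eq, hz, hz', ← ht] at hx
    nlinarith
  have step : ∀ a b u, ((a, b) ∈ ρ ∨ (b, a) ∈ ρ) → piM k n r (a + u) = piM k n r z →
      piM k n r (b + u) = piM k n r z → s + l ≤ vlen (a + u) → s + l ≤ vlen (b + u) := by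
    intro a b u hab e1 e2 hge
    by_contra! hlt
    have l1 := nolong _ e1
    have l2 := noshort _ e2
    have hbs : vlen (b + u) = s := by
      by_contra hne
      exact h2 (b + u) (s + l - vlen (b + u)) (by omega) (by omega) (by omega)
        (wts _ _ e2 (by omega))
    have w1 := wts _ 0 e1 (by omega)
    have w2 := wts _ l e2 (by omega)
    by_cases hu : ∃ i, 0 < u i
    · obtain ⟨i, hi⟩ := hu
      exact h1 (a + u) (b + u) (by omega) (by omega) hbs w2 i (by rw [Pi.add_apply]; omega)
        (by rw [Pi.add_apply]; omega)
    · push Not at hu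
      have : u = 0 := by funext i; exact Nat.le_zero.1 (hu i)
      subst this
      simp only [add_zero] at *
      exact hno a b hab (by omega) (by omega) hbs
  have key := CongGen.le_of (E := fun a b => piM k n r a = piM k n r b ∧
    (piM k n r a = piM k n r z → (s + l ≤ vlen a ↔ s + l ≤ vlen b))) (fun a => ⟨rfl, fun _ => .rfl⟩)
    (fun a b h => ⟨h.1.symm, fun e => (h.2 (h.1.trans e)).symm⟩)
    (fun a b c h h' => ⟨h.1.trans h'.1, fun e => (h.2 e).trans (h'.2 (h.1.symm.trans e))⟩)
    ?_ ((hP.2 z y).2 hzy)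
  · have := (key.2 rfl).1 (by omega)
    omega
  · intro a b u hab
    have e : piM k n r (a + u) = piM k n r (b + u) := by
      rw [piM_add, piM_add, hP.1 _ hab]
    exact ⟨e, fun h => ⟨step a b u (.inl hab) h (e.symm.trans h),
      step b a u (.inr hab) (e.symm.trans h) h⟩⟩

lemma pres_iff {k n : ℕ} {r : Fin (k + 1) → ℕ} (hmono : StrictMono r) (hpos : 0 < r 0)
    (hn : r (Fin.last k) ^ 2 < n) {ρ : Set ((Fin (k + 2) → ℕ) × (Fin (k + 2) → ℕ))} :
    IsPres (piM k n r) ρ ↔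
      (∀ p ∈ ρ, piM k n r p.1 = piM k n r p.2) ∧ GenH k r ρ ∧ Cover k n r ρ :=
  ⟨fun h => ⟨h.1, genH_of hmono hpos hn h, cover_of hmono hpos hn h⟩,
    fun h => pres_of (by omega) h.1 h.2.1 h.2.2⟩

/-! ### The map `Phi` -/

lemma Phi_gt {k l : ℕ} {a b : Fin (k + 2) → ℕ} (hl : 0 < l) (h : vlen a = vlen b + l) :
    Phi k (a, b) = (a + l • Pi.single 0 1, b + l • Pi.single (Fin.last (k + 1)) 1) := by
  have : vlen a - vlen b = l := by omega
  unfold Phi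
  rw [if_pos (by dsimp only; omega)]
  simp only [this]

lemma Phi_lt {k l : ℕ} {a b : Fin (k + 2) → ℕ} (hl : 0 < l) (h : vlen b = vlen a + l) :
    Phi k (a, b) = (a + l • Pi.single (Fin.last (k + 1)) 1, b + l • Pi.single 0 1) := by
  have : vlen b - vlen a = l := by omega
  unfold Phi
  rw [if_neg (by dsimp only; omega), if_pos (by dsimp only; omega)]
  simp only [this]

lemma Phi_eq {k : ℕ} {a b : Fin (k + 2) → ℕ} (h : vlen a = vlen b) :
    Phi k (a, b) = (a, b) := by
  unfold Phi
  rw [if_neg (by dsimp only; omega), if_neg (by dsimp only; omega)]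

lemma tri {m : ℕ} (a b : Fin m → ℕ) : vlen a = vlen b ∨ (∃ l, 0 < l ∧ vlen a = vlen b + l) ∨
    (∃ l, 0 < l ∧ vlen b = vlen a + l) := by
  rcases lt_trichotomy (vlen a) (vlen b) with h | h | h
  · exact .inr (.inr ⟨vlen b - vlen a, by omega, by omega⟩)
  · exact .inl h
  · exact .inr (.inl ⟨vlen a - vlen b, by omega, by omega⟩)

lemma Phi_inj (k : ℕ) : Function.Injective (Phi k) := by
  rintro ⟨a, b⟩ ⟨c, d⟩ h
  rcases tri a b with h1 | ⟨l, hl, h1⟩ | ⟨l, hl, h1⟩ <;>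
  rcases tri c d with h2 | ⟨m, hm, h2⟩ | ⟨m, hm, h2⟩ <;>
  first
  | rw [Phi_eq h1] at h
  | rw [Phi_gt hl h1] at h
  | rw [Phi_lt hl h1] at h
  all_goals first
  | rw [Phi_eq h2] at h
  | rw [Phi_gt hm h2] at h
  | rw [Phi_lt hm h2] at h
  all_goals
    rw [Prod.mk.injEq] at h
    obtain ⟨e1, e2⟩ := h
    have f1 := congrArg vlen e1
    have f2 := congrArg vlen e2
    try simp only [vlen_add, vlen_ss] at f1 f2
    first
    | (exfalso; omega)
    | (rw [e1, e2])
    | (have : l = m := by omega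
       subst this
       rw [add_right_cancel e1, add_right_cancel e2])

lemma Phi_ker {k n : ℕ} {r : Fin (k + 1) → ℕ} (p : (Fin (k + 2) → ℕ) × (Fin (k + 2) → ℕ)) :
    piM k (n + r (Fin.last k)) r (Phi k p).1 = piM k (n + r (Fin.last k)) r (Phi k p).2 ↔
      piM k n r p.1 = piM k n r p.2 := by
  obtain ⟨a, b⟩ := p
  rcases tri a b with h1 | ⟨l, hl, h1⟩ | ⟨l, hl, h1⟩
  · rw [Phi_eq h1]
    simp only [piM_eq, h1]
    omega
  · rw [Phi_gt hl h1]
    simp only [piM_eq, h1, vlen_add, vlen_ss, wt_add, wt_ss, rr_zero, rr_last, add_mul, mul_add,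
      mul_zero, mul_comm l]
    omega
  · rw [Phi_lt hl h1]
    simp only [piM_eq, h1, vlen_add, vlen_ss, wt_add, wt_ss, rr_zero, rr_last, add_mul, mul_add,
      mul_zero, mul_comm l]
    omega

lemma hpart_image {k : ℕ} (ρ : Set ((Fin (k + 2) → ℕ) × (Fin (k + 2) → ℕ))) :
    hpart (Phi k '' ρ) = hpart ρ := by
  ext ⟨x, y⟩
  constructor
  · rintro ⟨⟨⟨a, b⟩, hab, he⟩, h⟩
    rcases tri a b with h1 | ⟨l, hl, h1⟩ | ⟨l, hl, h1⟩
    · rw [Phi_eq h1] at he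
      exact ⟨he ▸ hab, h⟩
    · exfalso
      rw [Phi_gt hl h1, Prod.mk.injEq] at he
      simp only [← he.1, ← he.2, vlen_add, vlen_ss] at h
      omega
    · exfalso
      rw [Phi_lt hl h1, Prod.mk.injEq] at he
      simp only [← he.1, ← he.2, vlen_add, vlen_ss] at h
      omega
  · rintro ⟨h, h'⟩
    exact ⟨⟨(x, y), h, Phi_eq h'⟩, h'⟩

lemma NHB_le {k n : ℕ} {r : Fin (k + 1) → ℕ} (hmono : StrictMono r) (hpos : 0 < r 0)
    (hn : r (Fin.last k) ^ 2 < n) {s l w : ℕ} (h : NHB k n r s l w) : l ≤ s := by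
  obtain ⟨hl, _, ⟨b, hb, hb'⟩, _⟩ := h
  have := short_len hmono hpos hn (x := b) hl (by omega)
  have hR : 0 < r (Fin.last k) := lt_of_lt_of_le hpos (hmono.monotone (Fin.zero_le _))
  nlinarith

lemma cover_image {k n : ℕ} {r : Fin (k + 1) → ℕ} (hmono : StrictMono r) (hpos : 0 < r 0)
    (hn : r (Fin.last k) ^ 2 < n) (ρ : Set ((Fin (k + 2) → ℕ) × (Fin (k + 2) → ℕ))) :
    Cover k (n + r (Fin.last k)) r (Phi k '' ρ) ↔ Cover k n r ρ := by
  have hn' : r (Fin.last k) ^ 2 < n + r (Fin.last k) := by omega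
  constructor
  · intro hC s l w hN
    have hl := hN.1
    obtain ⟨x, y, hxy, hx, hx', hy⟩ := hC _ _ _ ((NHB_shift hmono hpos hn s l w).1 hN)
    rcases hxy with ⟨⟨a, b⟩, hab, he⟩ | ⟨⟨b, a⟩, hab, he⟩
    · refine ⟨a, b, .inl hab, ?_⟩
      rcases tri a b with h1 | ⟨m, hm, h1⟩ | ⟨m, hm, h1⟩
      · rw [Phi_eq h1, Prod.mk.injEq] at he
        rw [he.1, he.2] at h1
        omega
      · rw [Phi_gt hm h1, Prod.mk.injEq] at he
        simp only [← he.1, ← he.2, vlen_add, vlen_ss, wt_add, wt_ss, rr_zero] at hx hx' hy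
        omega
      · rw [Phi_lt hm h1, Prod.mk.injEq] at he
        simp only [← he.1, ← he.2, vlen_add, vlen_ss, wt_add, wt_ss] at hx hx' hy
        omega
    · refine ⟨a, b, .inr hab, ?_⟩
      rcases tri b a with h1 | ⟨m, hm, h1⟩ | ⟨m, hm, h1⟩
      · rw [Phi_eq h1, Prod.mk.injEq] at he
        rw [he.1, he.2] at h1
        omega
      · rw [Phi_gt hm h1, Prod.mk.injEq] at he
        simp only [← he.1, ← he.2, vlen_add, vlen_ss, wt_add, wt_ss] at hx hx' hy
        omega
      · rw [Phi_lt hm h1, Prod.mk.injEq] at he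
        simp only [← he.1, ← he.2, vlen_add, vlen_ss, wt_add, wt_ss, rr_zero] at hx hx' hy
        omega
  · intro hC s' l w hN
    have hl := hN.1
    have hls := NHB_le hmono hpos hn' hN
    obtain ⟨s, rfl⟩ : ∃ s, s' = s + l := ⟨s' - l, by omega⟩
    obtain ⟨a, b, hab, ha, ha', hb⟩ := hC _ _ _ ((NHB_shift hmono hpos hn s l w).2 hN)
    refine ⟨a + l • Pi.single 0 1, b + l • Pi.single (Fin.last (k + 1)) 1, ?_, ?_, ?_, ?_⟩
    · rcases hab with h | h
      · exact .inl ⟨_, h, Phi_gt hl (by omega)⟩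
      · exact .inr ⟨_, h, Phi_lt hl (by omega)⟩
    · simp only [vlen_add, vlen_ss, ha]
    · simp only [wt_add, wt_ss, rr_zero, ha']; omega
    · simp only [vlen_add, vlen_ss, hb]

lemma pres_image {k n : ℕ} {r : Fin (k + 1) → ℕ} (hmono : StrictMono r) (hpos : 0 < r 0)
    (hn : r (Fin.last k) ^ 2 < n) (ρ : Set ((Fin (k + 2) → ℕ) × (Fin (k + 2) → ℕ))) :
    IsPres (piM k (n + r (Fin.last k)) r) (Phi k '' ρ) ↔ IsPres (piM k n r) ρ := by
  have hn' : r (Fin.last k) ^ 2 < n + r (Fin.last k) := by omega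
  rw [pres_iff hmono hpos hn, pres_iff hmono hpos hn', cover_image hmono hpos hn]
  unfold GenH
  rw [hpart_image, Set.forall_mem_image]
  simp only [Phi_ker]

/-- nonhomogeneous pairs of a minimal presentation have Betti type, and can be shifted down -/
lemma NHB_pair {k n : ℕ} {r : Fin (k + 1) → ℕ} (hmono : StrictMono r) (hpos : 0 < r 0)
    (hn : r (Fin.last k) ^ 2 < n) {a b : Fin (k + 2) → ℕ} {l : ℕ} (hl : vlen a = vlen b + l)
    (hN : NHB k n r (vlen b) l (wt k r a)) (hpi : piM k n r a = piM k n r b) :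
    l ≤ a 0 ∧ l ≤ b (Fin.last (k + 1)) := by
  obtain ⟨hl0, -, -, h1, -⟩ := hN
  have hw : wt k r b = wt k r a + n * l := by
    rw [piM_eq, piM_eq, hl, mul_add] at hpi
    omega
  have hlt : vlen b < vlen a := by omega
  have ia : inn k a < r (Fin.last k) := by
    by_contra! h
    obtain ⟨y, hy, _, hy', _⟩ := red_step hmono hpos h
    obtain ⟨x, hx, hx', _⟩ := has_last hmono hpos hn hpi.symm hlt
    exact h1 y x (by rw [← hy.1, hl]) hy.2.symm hx.1.symm (by rw [← hx.2, hw]) _ hy' hx'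
  have ib : inn k b < r (Fin.last k) := by
    by_contra! h
    obtain ⟨y, hy, hy', _⟩ := red_step hmono hpos h
    obtain ⟨x, hx, hx', _⟩ := has_zero hmono hpos hn hpi hlt
    exact h1 x y (by rw [← hx.1, hl]) hx.2.symm hy.1.symm (by rw [← hy.2, hw]) _ hx' hy'
  have hwb := wt_le hmono hpos b
  exact ⟨zero_ge hmono hpos hn ia (by rw [hl, mul_add]; omega),
    last_ge hmono hpos hn ib (by omega)⟩

lemma exists_sub_ss {m : ℕ} {x : Fin m → ℕ} {i : Fin m} {l : ℕ} (hi : l ≤ x i) :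
    ∃ y : Fin m → ℕ, x = y + l • Pi.single i 1 := by
  refine ⟨_, (tsub_add_cancel_of_le (?_ : _ ≤ x)).symm⟩
  intro j
  by_cases h : j = i
  · subst h; simpa using hi
  · simp [h]

lemma min_NHB {k n : ℕ} {r : Fin (k + 1) → ℕ} (hmono : StrictMono r) (hpos : 0 < r 0)
    (hn : r (Fin.last k) ^ 2 < n) {σ : Set ((Fin (k + 2) → ℕ) × (Fin (k + 2) → ℕ))}
    (hσ : IsMinPres (piM k n r) σ) {p a b} (hp : p ∈ σ) (hab : p = (a, b) ∨ p = (b, a)) {l : ℕ}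
    (hl0 : 0 < l) (hl : vlen a = vlen b + l) : NHB k n r (vlen b) l (wt k r a) := by
  by_contra hN
  obtain ⟨hP, hmin⟩ := hσ
  have h3 := (pres_iff hmono hpos hn).1 hP
  have hpres : IsPres (piM k n r) (σ \ {p}) := by
    rw [pres_iff hmono hpos hn]
    refine ⟨fun q hq => h3.1 q hq.1, ?_, ?_⟩
    · have : hpart (σ \ {p}) = hpart σ := by
        ext q
        refine ⟨fun h => ⟨h.1.1, h.2⟩, fun h => ⟨⟨h.1, ?_⟩, h.2⟩⟩
        rintro rfl
        have := h.2
        rcases hab with rfl | rfl <;> simp only at this <;> omega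
      have h4 := h3.2.1
      unfold GenH at h4 ⊢
      rwa [this]
    · intro s m w hN'
      obtain ⟨x, y, hxy, hx, hx', hy⟩ := h3.2.2 s m w hN'
      have hm := hN'.1
      refine ⟨x, y, ?_, hx, hx', hy⟩
      have : ¬ (x = a ∧ y = b) := by
        rintro ⟨rfl, rfl⟩
        apply hN
        have : l = m := by omega
        rw [hy, hx', this]
        exact hN'
      have h' : ¬ (x = b ∧ y = a) := by
        rintro ⟨rfl, rfl⟩
        omega
      rcases hxy with h | h
      · refine .inl ⟨h, ?_⟩
        intro e
        rw [Set.mem_singleton_iff] at e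
        subst e
        rcases hab with e | e <;> rw [Prod.mk.injEq] at e <;> tauto
      · refine .inr ⟨h, ?_⟩
        intro e
        rw [Set.mem_singleton_iff] at e
        subst e
        rcases hab with e | e <;> rw [Prod.mk.injEq] at e <;> tauto
  have := hmin _ Set.sdiff_subset hpres
  rw [← this] at hp
  exact hp.2 rfl

lemma min_range {k n : ℕ} {r : Fin (k + 1) → ℕ} (hmono : StrictMono r) (hpos : 0 < r 0)
    (hn : r (Fin.last k) ^ 2 < n) {σ : Set ((Fin (k + 2) → ℕ) × (Fin (k + 2) → ℕ))}
    (hσ : IsMinPres (piM k n r) σ) : σ ⊆ Set.range (Phi k) := by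
  rintro ⟨x, y⟩ hp
  rcases tri x y with h1 | ⟨l, hl, h1⟩ | ⟨l, hl, h1⟩
  · exact ⟨_, Phi_eq h1⟩
  · obtain ⟨h2, h3⟩ := NHB_pair hmono hpos hn h1
      (min_NHB hmono hpos hn hσ hp (.inl rfl) hl h1) (hσ.1.1 _ hp)
    obtain ⟨a, rfl⟩ := exists_sub_ss h2
    obtain ⟨b, rfl⟩ := exists_sub_ss h3
    simp only [vlen_add, vlen_ss] at h1
    exact ⟨_, Phi_gt hl (by omega)⟩
  · obtain ⟨h2, h3⟩ := NHB_pair hmono hpos hn h1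
      (min_NHB hmono hpos hn hσ hp (.inr rfl) hl h1) (hσ.1.1 _ hp).symm
    obtain ⟨a, rfl⟩ := exists_sub_ss h2
    obtain ⟨b, rfl⟩ := exists_sub_ss h3
    simp only [vlen_add, vlen_ss] at h1
    exact ⟨_, Phi_lt hl (by omega)⟩

/-- For `n > r_k²` with `M_n` primitive and minimally generated, `Φ_n` carries minimal
presentations of `M_n` to minimal presentations of `M_{n+r_k}`, inducing a bijection
between the two sets of minimal presentations. -/
theorem stmt10 (k n : ℕ) (r : Fin (k + 1) → ℕ) (hmono : StrictMono r) (hpos : 0 < r 0)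
    (hn : r (Fin.last k) ^ 2 < n) (hprim : Primitive k n r)
    (hmingen : ∀ j : Fin (k + 2), ∀ z : Fin (k + 2) → ℕ,
      piM k n r z = piM k n r (Pi.single j 1) → z = Pi.single j 1) :
    (∀ ρ, IsMinPres (piM k n r) ρ →
        IsMinPres (piM k (n + r (Fin.last k)) r) (Phi k '' ρ)) ∧
      Set.BijOn (fun ρ => Phi k '' ρ)
        {ρ | IsMinPres (piM k n r) ρ}
        {ρ | IsMinPres (piM k (n + r (Fin.last k)) r) ρ} := by


  have hinj := Phi_inj k
  have hA := pres_image hmono hpos hn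
  have hn' : r (Fin.last k) ^ 2 < n + r (Fin.last k) := by omega
  have h1 : ∀ ρ, IsMinPres (piM k n r) ρ →
      IsMinPres (piM k (n + r (Fin.last k)) r) (Phi k '' ρ) := by
    rintro ρ ⟨hP, hmin⟩
    refine ⟨(hA ρ).2 hP, ?_⟩
    intro σ hσ hσP
    obtain ⟨τ, hτ, rfl⟩ := Set.subset_image_iff.1 hσ
    rw [hmin τ hτ ((hA τ).1 hσP)]
  refine ⟨h1, fun ρ hρ => h1 ρ hρ, fun ρ _ τ _ h => hinj.image_injective h, ?_⟩
  intro σ hσ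
  obtain ⟨ρ, rfl⟩ := Set.subset_range_iff_exists_image_eq.1 (min_range hmono hpos hn' hσ)
  refine ⟨ρ, ⟨(hA ρ).1 hσ.1, ?_⟩, rfl⟩
  intro τ hτ hτP
  exact hinj.image_injective (hσ.2 _ (Set.image_mono hτ) ((hA τ).2 hτP))
end

section
/- Fix r_1 < ... < r_k with d = gcd(r_1,...,r_k). For all n > r_k² such that M_n and M_{n+r_k} are primitive, the catenary degree satisfies c(M_{n+r_k}) = c(M_n) + d. -/
open Finset

/-- `N` admits `N`-chains between all pairs of factorizations of every element of
`M_n`. The catenary degree of `M_n` is the least such `N`. -/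
def catSet (k n : ℕ) (r : Fin (k + 1) → ℕ) : Set ℕ :=
  {N | ∀ z z' : Fin (k + 2) → ℕ, piM k n r z = piM k n r z' →
    ∃ (L : ℕ) (a : Fin (L + 1) → Fin (k + 2) → ℕ),
      a 0 = z ∧ a (Fin.last L) = z' ∧
      (∀ i, piM k n r (a i) = piM k n r z) ∧
      ∀ i : Fin L, fdist (a i.castSucc) (a i.succ) ≤ N}


namespace Shift

structure Setup (m : ℕ) where
  s : Fin m → ℕ
  R : ℕ
  d : ℕ
  i0 : Fin m
  iR : Fin m
  hs0 : s i0 = 0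
  hsR : s iR = R
  hle : ∀ i, s i ≤ R
  hR : 0 < R
  hd : ∀ i, d ∣ s i
  hb : ∃ v : Fin m → ℕ, (∑ i, v i * s i) ≡ d [MOD R]

variable {m : ℕ}

theorem vlen_add (z w : Fin m → ℕ) : vlen (z + w) = vlen z + vlen w := by
  simp [vlen, Finset.sum_add_distrib]

theorem vlen_single (i : Fin m) (t : ℕ) : vlen (Pi.single i t : Fin m → ℕ) = t := by
  simp [vlen]

theorem vlen_zero : vlen (0 : Fin m → ℕ) = 0 := by simp [vlen]

theorem eq_zero_of_vlen {z : Fin m → ℕ} (h : vlen z = 0) : z = 0 := by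
  funext i
  simpa using (Finset.sum_eq_zero_iff.mp h) i (Finset.mem_univ i)

theorem le_decomp {u v : Fin m → ℕ} (h : u ≤ v) : v = u + (v - u) := by
  funext i
  have : u i ≤ v i := h i
  simp only [Pi.add_apply, Pi.sub_apply]
  omega

theorem fdist_comm (a b : Fin m → ℕ) : fdist a b = fdist b a := by
  unfold fdist
  rw [max_comm]
  simp only [min_comm]

theorem fdist_add_le (w p q : Fin m → ℕ) (M : ℕ) (hp : vlen p ≤ M) (hq : vlen q ≤ M) :
    fdist (w + p) (w + q) ≤ M := by
  unfold fdist
  apply max_le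
  · refine le_trans (Finset.sum_le_sum fun i _ => ?_) hp
    simp only [Pi.add_apply]; omega
  · refine le_trans (Finset.sum_le_sum fun i _ => ?_) hq
    simp only [Pi.add_apply]; omega

theorem fdist_add_right (a b u : Fin m → ℕ) : fdist (a + u) (b + u) = fdist a b := by
  unfold fdist
  have e1 : ∀ i, (a + u) i - min ((a + u) i) ((b + u) i) = a i - min (a i) (b i) := by
    intro i; simp only [Pi.add_apply]; omega
  have e2 : ∀ i, (b + u) i - min ((a + u) i) ((b + u) i) = b i - min (a i) (b i) := by
    intro i; simp only [Pi.add_apply]; omega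
  simp only [e1, e2]

theorem fdist_decomp (a b : Fin m → ℕ) : ∃ w p q : Fin m → ℕ, a = w + p ∧ b = w + q ∧
    vlen p ≤ fdist a b ∧ vlen q ≤ fdist a b := by
  refine ⟨fun i => min (a i) (b i), fun i => a i - min (a i) (b i),
    fun i => b i - min (a i) (b i), ?_, ?_, le_max_left _ _, le_max_right _ _⟩
  · funext i; simp only [Pi.add_apply]; omega
  · funext i; simp only [Pi.add_apply]; omega

/-- Counting vector of a sequence restricted to a set of positions. -/
def cnt {L : ℕ} (f : Fin L → Fin m) (I : Finset (Fin L)) : Fin m → ℕ :=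
  fun i => (I.filter fun j => f j = i).card

theorem cnt_sum {L : ℕ} (f : Fin L → Fin m) (I : Finset (Fin L)) (g : Fin m → ℕ) :
    ∑ i, cnt f I i * g i = ∑ j ∈ I, g (f j) := by
  unfold cnt
  simp only [Finset.card_filter, Finset.sum_mul]
  rw [Finset.sum_comm]
  refine Finset.sum_congr rfl fun j _ => ?_
  simp

theorem cnt_vlen {L : ℕ} (f : Fin L → Fin m) (I : Finset (Fin L)) :
    vlen (cnt f I) = I.card := by
  have := cnt_sum f I (fun _ => 1)
  simpa [vlen] using this

theorem cnt_compl {L : ℕ} (f : Fin L → Fin m) (I : Finset (Fin L)) :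
    cnt f Finset.univ = cnt f I + cnt f Iᶜ := by
  funext i
  simp only [cnt, Pi.add_apply]
  rw [← Finset.card_union_of_disjoint]
  · rw [← Finset.filter_union, Finset.union_compl]
  · exact Finset.disjoint_filter_filter disjoint_compl_right

theorem cnt_mono {L : ℕ} (f : Fin L → Fin m) {I J : Finset (Fin L)} (h : I ⊆ J) :
    cnt f I ≤ cnt f J := fun _ => Finset.card_le_card (Finset.filter_subset_filter _ h)

theorem exists_seq (g : Fin m → ℕ) (z : Fin m → ℕ) :
    ∃ f : Fin (vlen z) → Fin m, cnt f Finset.univ = z ∧ Monotone (fun j => g (f j)) := by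
  classical
  let M : Multiset (Fin m) := ∑ i, z i • {i}
  have hcount : ∀ i, M.count i = z i := by
    intro i
    simp only [M, Multiset.count_sum', Multiset.count_nsmul, Multiset.count_singleton]
    simp
  have hcard : M.card = vlen z := by
    simp [M, vlen]
  let l := M.toList.mergeSort (fun a b => decide (g a ≤ g b))
  have hperm : l.Perm M.toList := List.mergeSort_perm _ _
  have hlen : l.length = vlen z := by rw [hperm.length_eq, Multiset.length_toList, hcard]
  have hsort : l.Pairwise (fun a b => decide (g a ≤ g b) = true) := by
    apply List.pairwise_mergeSort
    · intro a b c; simp; omega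
    · intro a b; simp; omega
  refine ⟨fun j => l.get (j.cast hlen.symm), ?_, ?_⟩
  · funext i
    have h1 : l.count i = z i := by
      rw [hperm.count_eq, ← Multiset.coe_count, Multiset.coe_toList, hcount]
    rw [← h1]
    unfold cnt
    have : ∀ (n : ℕ) (h : n = l.length), (Finset.univ.filter fun j : Fin n => l.get (j.cast h) = i).card = l.count i := by
      intro n h
      subst h
      have := Fin.card_filter_univ_eq_vector_get_eq_count i (⟨l, rfl⟩ : List.Vector (Fin m) l.length)
      simpa [List.Vector.get, eq_comm] using this
    exact this _ hlen.symm
  · intro a b hab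
    rcases hab.eq_or_lt with h | h
    · subst h; exact le_rfl
    · have := List.pairwise_iff_get.mp hsort (a.cast hlen.symm) (b.cast hlen.symm) h
      simpa using this

/-- The walk lemma. -/
theorem walk {L : ℕ} (dd : Fin L → ℤ) (R : ℕ) (hsum : ∑ j, dd j = 0)
    (hdiff : ∀ i j, dd i - dd j ≤ R) (hL : R + 1 < L) :
    ∃ I : Finset (Fin L), I.Nonempty ∧ Iᶜ.Nonempty ∧ ∑ j ∈ I, dd j = 0 := by
  classical
  have : Nonempty (Fin L) := ⟨⟨0, by omega⟩⟩
  obtain ⟨ia, ha⟩ := Finite.exists_max dd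
  obtain ⟨ib, hb⟩ := Finite.exists_min dd
  have key : ∀ I : Finset (Fin L), ∑ j ∈ I, dd j + ∑ j ∈ Iᶜ, dd j = 0 := by
    intro I; rw [Finset.sum_add_sum_compl, hsum]
  have hchain : ∀ j ≤ L, ∃ c : ℕ → Finset (Fin L), (∀ i ≤ j, (c i).card = i ∧
      dd ib ≤ ∑ x ∈ c i, dd x ∧ ∑ x ∈ c i, dd x ≤ dd ia) ∧
      ∀ i i', i ≤ i' → i' ≤ j → c i ⊆ c i' := by
    intro j
    induction j with
    | zero =>
      intro _
      refine ⟨fun _ => ∅, ?_, fun _ _ _ _ => le_rfl⟩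
      intro i hi
      have : i = 0 := by omega
      subst this
      refine ⟨rfl, ?_, ?_⟩
      · by_contra h
        simp only [Finset.sum_empty, not_le] at h
        have : 0 < ∑ j, dd j := Finset.sum_pos (fun i _ => lt_of_lt_of_le h (hb i)) Finset.univ_nonempty
        omega
      · by_contra h
        simp only [Finset.sum_empty, not_le] at h
        have : ∑ j, dd j < 0 := Finset.sum_neg (fun i _ => lt_of_le_of_lt (ha i) h) Finset.univ_nonempty
        omega
    | succ j ih =>
      intro hj
      obtain ⟨c, hc, hm⟩ := ih (by omega)
      obtain ⟨hcard, hlo, hhi⟩ := hc j le_rfl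
      have hne : (c j)ᶜ.Nonempty := by
        rw [← Finset.card_pos, Finset.card_compl, Fintype.card_fin]; omega
      have hk := key (c j)
      have hx : ∃ x ∈ (c j)ᶜ, dd ib ≤ ∑ x ∈ c j, dd x + dd x ∧ ∑ x ∈ c j, dd x + dd x ≤ dd ia := by
        by_cases h0 : ∑ x ∈ c j, dd x ≤ 0
        · obtain ⟨x, hx, hx0⟩ : ∃ x ∈ (c j)ᶜ, 0 ≤ dd x := by
            by_contra! hcon
            have := Finset.sum_neg hcon hne
            omega
          exact ⟨x, hx, by omega, by have := ha x; omega⟩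
        · obtain ⟨x, hx, hx0⟩ : ∃ x ∈ (c j)ᶜ, dd x ≤ 0 := by
            by_contra! hcon
            have := Finset.sum_pos hcon hne
            omega
          exact ⟨x, hx, by have := hb x; omega, by omega⟩
      obtain ⟨x, hx, hx1, hx2⟩ := hx
      rw [Finset.mem_compl] at hx
      refine ⟨fun i => if i ≤ j then c i else insert x (c j), ?_, ?_⟩
      · intro i hi
        by_cases hij : i ≤ j
        · simpa [hij] using hc i hij
        · have : i = j + 1 := by omega
          subst this
          simp only [hij, if_false]
          rw [Finset.card_insert_of_notMem hx, Finset.sum_insert hx, hcard]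
          refine ⟨rfl, by omega, by omega⟩
      · intro i i' hii hi'
        by_cases h' : i' ≤ j
        · have : i ≤ j := by omega
          simp only [h', this, if_true]
          exact hm i i' hii h'
        · by_cases h : i ≤ j
          · simp only [h, h', if_true, if_false]
            exact (hm i j h le_rfl).trans (Finset.subset_insert _ _)
          · simp only [h, h', if_false]; exact le_rfl
  obtain ⟨c, hc, hm⟩ := hchain L le_rfl
  have hpig : ∃ x ∈ Finset.range L, ∃ y ∈ Finset.range L, x ≠ y ∧
      (∑ j ∈ c x, dd j) = ∑ j ∈ c y, dd j := by
    apply Finset.exists_ne_map_eq_of_card_lt_of_maps_to (t := Finset.Icc (dd ib) (dd ia))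
    · rw [Int.card_Icc, Finset.card_range]
      have := hdiff ia ib
      omega
    · intro x hx
      have hx' := Finset.mem_range.mp hx
      have := hc x hx'.le
      simp only [Finset.coe_Icc, Set.mem_Icc]
      exact this.2
  obtain ⟨x, hx, y, hy, hxy, he⟩ := hpig
  rw [Finset.mem_range] at hx hy
  have main : ∀ x y, x < y → y < L → (∑ j ∈ c x, dd j) = ∑ j ∈ c y, dd j →
      ∃ I : Finset (Fin L), I.Nonempty ∧ Iᶜ.Nonempty ∧ ∑ j ∈ I, dd j = 0 := by
    intro x y hxy hy he
    have hsub := hm x y hxy.le hy.le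
    have hcx := (hc x (by omega)).1
    have hcy := (hc y (by omega)).1
    have hcard : (c y \ c x).card = y - x := by rw [Finset.card_sdiff_of_subset hsub, hcx, hcy]
    refine ⟨c y \ c x, ?_, ?_, ?_⟩
    · rw [← Finset.card_pos]; omega
    · rw [← Finset.card_pos, Finset.card_compl, Fintype.card_fin]; omega
    · have := Finset.sum_sdiff (f := dd) hsub
      omega
  rcases lt_or_gt_of_ne hxy with h | h
  · exact main x y h hy he
  · exact main y x h hx he.symm

namespace Setup

variable (st : Setup m)

/-- Shift sum. -/
def S (z : Fin m → ℕ) : ℕ := ∑ i, z i * st.s i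

/-- Complementary shift sum. -/
def T (z : Fin m → ℕ) : ℕ := ∑ i, z i * (st.R - st.s i)

/-- Value of a factorization. -/
def val (n : ℕ) (z : Fin m → ℕ) : ℕ := n * vlen z + st.S z

/-- Homogeneous equivalence. -/
def Hom (z z' : Fin m → ℕ) : Prop := vlen z = vlen z' ∧ st.S z = st.S z'

/-- Chain connectedness. -/
def Conn (n N : ℕ) : (Fin m → ℕ) → (Fin m → ℕ) → Prop :=
  Relation.ReflTransGen (fun a b => st.val n a = st.val n b ∧ fdist a b ≤ N)

theorem S_add (z w : Fin m → ℕ) : st.S (z + w) = st.S z + st.S w := by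
  simp [S, Finset.sum_add_distrib, add_mul]

theorem T_add (z w : Fin m → ℕ) : st.T (z + w) = st.T z + st.T w := by
  simp [T, Finset.sum_add_distrib, add_mul]

theorem S_single (i : Fin m) (t : ℕ) : st.S (Pi.single i t : Fin m → ℕ) = t * st.s i := by
  unfold S
  rw [Finset.sum_eq_single i]
  · simp
  · intro b _ hb; simp [hb]
  · simp

theorem S_zero : st.S 0 = 0 := by simp [S]

theorem S_T (z : Fin m → ℕ) : st.S z + st.T z = st.R * vlen z := by
  unfold S T vlen
  rw [← Finset.sum_add_distrib, Finset.mul_sum]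
  refine Finset.sum_congr rfl fun i _ => ?_
  have := st.hle i
  rw [← mul_add, Nat.add_sub_cancel' this, mul_comm]

theorem S_le (z : Fin m → ℕ) : st.S z ≤ st.R * vlen z := by
  have := st.S_T z; omega

theorem T_le (z : Fin m → ℕ) : st.T z ≤ st.R * vlen z := by
  have := st.S_T z; omega

theorem val_add (n : ℕ) (z w : Fin m → ℕ) : st.val n (z + w) = st.val n z + st.val n w := by
  simp only [val, vlen_add, S_add]; ring

variable {st}

theorem Hom.refl (z : Fin m → ℕ) : st.Hom z z := ⟨rfl, rfl⟩
theorem Hom.symm {z z' : Fin m → ℕ} (h : st.Hom z z') : st.Hom z' z := ⟨h.1.symm, h.2.symm⟩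
theorem Hom.trans {x y z : Fin m → ℕ} (h : st.Hom x y) (h' : st.Hom y z) : st.Hom x z :=
  ⟨h.1.trans h'.1, h.2.trans h'.2⟩
theorem Hom.val {z z' : Fin m → ℕ} (h : st.Hom z z') (n : ℕ) : st.val n z = st.val n z' := by
  simp [Setup.val, h.1, h.2]
theorem Hom.T {z z' : Fin m → ℕ} (h : st.Hom z z') : st.T z = st.T z' := by
  have h1 := st.S_T z
  have h2 := st.S_T z'
  rw [h.1, h.2] at h1
  omega

theorem Conn.symm {n N : ℕ} {z z' : Fin m → ℕ} (h : st.Conn n N z z') : st.Conn n N z' z := by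
  induction h with
  | refl => exact Relation.ReflTransGen.refl
  | tail _ h2 ih =>
    exact Relation.ReflTransGen.head ⟨h2.1.symm, by rw [fdist_comm]; exact h2.2⟩ ih

theorem Conn.trans {n N : ℕ} {x y z : Fin m → ℕ} (h : st.Conn n N x y) (h' : st.Conn n N y z) :
    st.Conn n N x z := Relation.ReflTransGen.trans h h'

theorem Conn.add {n N : ℕ} {z z' : Fin m → ℕ} (h : st.Conn n N z z') (u : Fin m → ℕ) :
    st.Conn n N (z + u) (z' + u) := by
  induction h with
  | refl => exact Relation.ReflTransGen.refl
  | tail _ h2 ih =>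
    exact Relation.ReflTransGen.tail ih
      ⟨by simp only [val_add, h2.1], by rw [fdist_add_right]; exact h2.2⟩

theorem Conn.step {n N : ℕ} (w p q : Fin m → ℕ) (hv : st.val n p = st.val n q)
    (hp : vlen p ≤ N) (hq : vlen q ≤ N) : st.Conn n N (w + p) (w + q) :=
  Relation.ReflTransGen.single ⟨by simp only [val_add, hv], fdist_add_le w p q N hp hq⟩

variable (st)

/-- Homogeneous relations are generated in length at most `R + 1`. -/
theorem hom_conn (n N : ℕ) (hN : st.R + 1 ≤ N) : ∀ (L : ℕ) (z z' : Fin m → ℕ), vlen z = L →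
    st.Hom z z' → st.Conn n N z z' := by
  intro L
  induction L using Nat.strong_induction_on with
  | _ L ih =>
  intro z z' hL hh
  by_cases hLR : L ≤ st.R + 1
  · have := Conn.step (st := st) (n := n) (N := N) 0 z z' (hh.val n) (by omega)
      (by have := hh.1; omega)
    simpa using this
  · obtain ⟨f, hf, fm⟩ := exists_seq st.s z
    obtain ⟨g, hg, gm⟩ := exists_seq st.s z'
    revert f g
    rw [← hh.1, hL]
    intro f hf fm g hg gm
    have hSf : ∀ I, st.S (cnt f I) = ∑ j ∈ I, st.s (f j) := fun I => cnt_sum f I st.s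
    have hSg : ∀ I, st.S (cnt g I) = ∑ j ∈ I, st.s (g j) := fun I => cnt_sum g I st.s
    obtain ⟨I, hI, hI', hsum⟩ := walk (fun j => (st.s (f j) : ℤ) - st.s (g j)) st.R (by
      have h1 := hSf Finset.univ
      have h2 := hSg Finset.univ
      rw [hf] at h1
      rw [hg, ← hh.2, h1] at h2
      rw [Finset.sum_sub_distrib]
      have : (∑ j, (st.s (f j) : ℤ)) = ∑ j, (st.s (g j) : ℤ) := by exact_mod_cast h2
      rw [this]; simp) (by
      intro i j
      have a1 := st.hle (f i)
      have a2 := st.hle (g j)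
      rcases le_total i j with h | h
      · have := fm h; simp only at this; omega
      · have := gm h; simp only at this; omega) (by omega)
    have hSI : st.S (cnt f I) = st.S (cnt g I) := by
      rw [hSf, hSg]
      rw [Finset.sum_sub_distrib] at hsum
      have : (∑ j ∈ I, (st.s (f j) : ℤ)) = ∑ j ∈ I, (st.s (g j) : ℤ) := by omega
      exact_mod_cast this
    have ez := cnt_compl f I
    have ez' := cnt_compl g I
    rw [hf] at ez
    rw [hg] at ez'
    have hSIc : st.S (cnt f Iᶜ) = st.S (cnt g Iᶜ) := by
      have h := hh.2
      rw [ez, ez', S_add, S_add] at h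
      omega
    have c1 := Finset.card_pos.mpr hI
    have c2 := Finset.card_pos.mpr hI'
    have c3 := Finset.card_add_card_compl I
    rw [Fintype.card_fin] at c3
    have k1 := ih I.card (by omega) (cnt f I) (cnt g I) (cnt_vlen _ _)
      ⟨by rw [cnt_vlen, cnt_vlen], hSI⟩
    have k2 := ih Iᶜ.card (by omega) (cnt f Iᶜ) (cnt g Iᶜ) (cnt_vlen _ _)
      ⟨by rw [cnt_vlen, cnt_vlen], hSIc⟩
    have k3 := k1.add (cnt f Iᶜ)
    have k4 := k2.add (cnt g I)
    rw [ez, ez']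
    rw [add_comm (cnt g I)]
    rw [add_comm (cnt g I)] at k3
    exact k3.trans k4

/-- Zero-sum subsequences modulo `R`. -/
theorem zero_sum (v : Fin m → ℕ) (hv : st.R ≤ vlen v) :
    ∃ u : Fin m → ℕ, u ≤ v ∧ 0 < vlen u ∧ st.R ∣ st.S u := by
  classical
  obtain ⟨f, hf, -⟩ := exists_seq st.s v
  let c : ℕ → Finset (Fin (vlen v)) := fun j => Finset.univ.filter fun x => x.val < j
  have hcard : ∀ j ≤ vlen v, (c j).card = j := by
    intro j hj
    simp only [c]
    rw [Fin.card_filter_val_lt]; omega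
  have hmono : ∀ i j, i ≤ j → c i ⊆ c j := by
    intro i j hij x hx
    simp only [c, Finset.mem_filter, Finset.mem_univ, true_and] at hx ⊢
    omega
  obtain ⟨x, hx, y, hy, hxy, he⟩ : ∃ x ∈ Finset.range (st.R + 1), ∃ y ∈ Finset.range (st.R + 1),
      x ≠ y ∧ st.S (cnt f (c x)) % st.R = st.S (cnt f (c y)) % st.R := by
    apply Finset.exists_ne_map_eq_of_card_lt_of_maps_to (t := Finset.range st.R)
    · simp
    · intro x _
      simpa using Nat.mod_lt _ st.hR
  rw [Finset.mem_range] at hx hy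
  have main : ∀ x y, x < y → y ≤ st.R →
      st.S (cnt f (c x)) % st.R = st.S (cnt f (c y)) % st.R →
      ∃ u : Fin m → ℕ, u ≤ v ∧ 0 < vlen u ∧ st.R ∣ st.S u := by
    intro x y hxy hy he
    have hsub := hmono x y hxy.le
    refine ⟨cnt f (c y \ c x), ?_, ?_, ?_⟩
    · conv_rhs => rw [← hf]
      exact cnt_mono f (Finset.subset_univ _)
    · rw [cnt_vlen, Finset.card_sdiff_of_subset hsub, hcard x (by omega), hcard y (by omega)]
      omega
    · have h1 : ∀ I, st.S (cnt f I) = ∑ j ∈ I, st.s (f j) := fun I => cnt_sum f I st.s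
      have := Finset.sum_sdiff (f := fun j => st.s (f j)) hsub
      rw [← h1, ← h1, ← h1] at this
      have h2 : st.S (cnt f (c x)) ≡ st.S (cnt f (c x)) + st.S (cnt f (c y \ c x)) [MOD st.R] := by
        rw [add_comm, this]; exact he
      have h3 := (Nat.modEq_iff_dvd' (Nat.le_add_right _ _)).mp h2
      simpa using h3
  rcases lt_or_gt_of_ne hxy with h | h
  · exact main x y h (by omega) he
  · exact main y x h (by omega) he.symm

theorem ne0R : st.i0 ≠ st.iR := by
  intro h
  have h0 := st.hs0
  rw [h, st.hsR] at h0
  have := st.hR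
  omega

/-- Reduction: few generators other than the extreme ones. -/
theorem red_aux : ∀ (M : ℕ) (v : Fin m → ℕ) (a b : ℕ), vlen v = M →
    ∃ (v' : Fin m → ℕ) (a' b' : ℕ), vlen v' < st.R ∧
      st.Hom (v + Pi.single st.i0 a + Pi.single st.iR b)
        (v' + Pi.single st.i0 a' + Pi.single st.iR b') := by
  intro M
  induction M using Nat.strong_induction_on with
  | _ M ih =>
  intro v a b hM
  by_cases hlt : M < st.R
  · exact ⟨v, a, b, by omega, Hom.refl _⟩
  · obtain ⟨u, hu, hpos, t, ht⟩ := st.zero_sum v (by omega)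
    have hv := le_decomp hu
    have hlen : vlen v = vlen u + vlen (v - u) := by rw [← vlen_add, ← hv]
    have hS : st.S v = st.S u + st.S (v - u) := by rw [← S_add, ← hv]
    have htu : t ≤ vlen u := by
      have := st.S_le u
      rw [ht] at this
      exact Nat.le_of_mul_le_mul_left this st.hR
    obtain ⟨v', a', b', h1, h2⟩ := ih (vlen (v - u)) (by omega) (v - u) (a + (vlen u - t)) (b + t) rfl
    refine ⟨v', a', b', h1, Hom.trans ?_ h2⟩
    constructor
    · simp only [vlen_add, vlen_single]; omega
    · simp only [S_add, S_single, st.hs0, st.hsR, hS, ht]; ring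

theorem red (z : Fin m → ℕ) : ∃ (v' : Fin m → ℕ) (a' b' : ℕ), vlen v' < st.R ∧
      st.Hom z (v' + Pi.single st.i0 a' + Pi.single st.iR b') := by
  have := st.red_aux _ z 0 0 rfl
  simpa using this

theorem T_single (i : Fin m) (t : ℕ) : st.T (Pi.single i t : Fin m → ℕ) = t * (st.R - st.s i) := by
  have h := st.S_T (Pi.single i t)
  rw [S_single, vlen_single] at h
  rw [Nat.mul_sub, mul_comm t st.R]
  omega

/-- If `T z` is large, then up to homogeneous equivalence `z` contains many smallest generators. -/
theorem pull0 (z : Fin m → ℕ) (t : ℕ) (h : st.R * st.R + st.R * t ≤ st.T z + st.R) (ht : 0 < t) :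
    ∃ z' : Fin m → ℕ, st.Hom z (z' + Pi.single st.i0 t) := by
  obtain ⟨v, a, b, hv, hh⟩ := st.red z
  have hT := hh.T
  simp only [T_add, T_single, st.hs0, st.hsR, Nat.sub_self, mul_zero, Nat.sub_zero, add_zero] at hT
  have h1 := st.T_le v
  have h2 : st.R * (vlen v + 1) ≤ st.R * st.R := Nat.mul_le_mul_left _ hv
  have hta : t ≤ a := by
    apply Nat.le_of_mul_le_mul_left _ st.hR
    rw [mul_comm a] at hT
    rw [mul_add] at h2
    omega
  refine ⟨v + Pi.single st.i0 (a - t) + Pi.single st.iR b, hh.trans ⟨?_, ?_⟩⟩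
  · simp only [vlen_add, vlen_single]; omega
  · simp only [S_add, S_single, st.hs0, st.hsR]; ring

theorem pullR (z : Fin m → ℕ) (t : ℕ) (h : st.R * st.R + st.R * t ≤ st.S z + st.R) (ht : 0 < t) :
    ∃ z' : Fin m → ℕ, st.Hom z (z' + Pi.single st.iR t) := by
  obtain ⟨v, a, b, hv, hh⟩ := st.red z
  have hT := hh.2
  simp only [S_add, S_single, st.hs0, st.hsR, mul_zero, add_zero] at hT
  have h1 := st.S_le v
  have h2 : st.R * (vlen v + 1) ≤ st.R * st.R := Nat.mul_le_mul_left _ hv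
  have hta : t ≤ b := by
    apply Nat.le_of_mul_le_mul_left _ st.hR
    rw [mul_comm b] at hT
    rw [mul_add] at h2
    omega
  obtain ⟨e, rfl⟩ := Nat.exists_eq_add_of_le hta
  refine ⟨v + Pi.single st.i0 a + Pi.single st.iR e, hh.trans ⟨?_, ?_⟩⟩
  · simp only [vlen_add, vlen_single]; omega
  · simp only [S_add, S_single, st.hs0, st.hsR]; ring

theorem dvd_S (z : Fin m → ℕ) : st.d ∣ st.S z :=
  Finset.dvd_sum fun i _ => Dvd.dvd.mul_left (st.hd i) _

theorem residue (σ : ℕ) (hσ : st.d ∣ σ) : ∃ v : Fin m → ℕ, vlen v < st.R ∧ st.S v ≡ σ [MOD st.R] := by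
  obtain ⟨w, hw⟩ := st.hb
  obtain ⟨c, rfl⟩ := hσ
  have h0 : st.S (c • w) ≡ st.d * c [MOD st.R] := by
    have : st.S (c • w) = st.S w * c := by
      simp only [S, Finset.sum_mul, Pi.smul_apply, smul_eq_mul]
      refine Finset.sum_congr rfl fun i _ => by ring
    rw [this]
    exact Nat.ModEq.mul_right c hw
  obtain ⟨v, a, b, hv, hh⟩ := st.red (c • w)
  refine ⟨v, hv, ?_⟩
  have h2 := hh.2
  simp only [S_add, S_single, st.hs0, st.hsR, mul_zero, add_zero] at h2
  rw [h2] at h0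
  refine Nat.ModEq.trans ?_ h0
  simp [Nat.ModEq]

/-- Existence of factorizations with prescribed length and shift sum. -/
theorem fill (L σ : ℕ) (hσ : st.d ∣ σ) (h1 : st.R * st.R ≤ σ) (h2 : σ + st.R * st.R ≤ st.R * L) :
    ∃ y : Fin m → ℕ, vlen y = L ∧ st.S y = σ := by
  obtain ⟨v, hv, hm⟩ := st.residue σ hσ
  have h3 := st.S_le v
  have h4 : st.R * (vlen v + 1) ≤ st.R * st.R := Nat.mul_le_mul_left _ hv
  rw [mul_add] at h4
  obtain ⟨c, hc⟩ := (Nat.modEq_iff_dvd' (by omega)).mp hm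
  have hL : vlen v + c ≤ L := by
    apply Nat.le_of_mul_le_mul_left _ st.hR
    rw [mul_add]
    omega
  refine ⟨v + Pi.single st.iR c + Pi.single st.i0 (L - vlen v - c), ?_, ?_⟩
  · simp only [vlen_add, vlen_single]; omega
  · simp only [S_add, S_single, st.hs0, st.hsR, mul_zero, add_zero]
    rw [mul_comm c]; omega

theorem rel {n l : ℕ} {z z' : Fin m → ℕ} (hv : st.val n z = st.val n z')
    (hl : vlen z = vlen z' + l) :
    st.S z' = n * l + st.S z ∧ st.T z = st.T z' + (n + st.R) * l := by
  have h1 := st.S_T z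
  have h2 := st.S_T z'
  unfold val at hv
  rw [hl] at hv h1
  rw [mul_add] at hv h1
  rw [add_mul]
  constructor <;> omega

theorem dvd_l {n l : ℕ} {z z' : Fin m → ℕ} (hc : Nat.Coprime n st.d)
    (hv : st.val n z = st.val n z') (hl : vlen z = vlen z' + l) : st.d ∣ l := by
  have h := (st.rel hv hl).1
  have h1 := st.dvd_S z'
  rw [h] at h1
  have h2 := (Nat.dvd_add_left (st.dvd_S z)).mp h1
  exact hc.symm.dvd_of_dvd_mul_left h2

theorem len_lower {n l t : ℕ} {z z' : Fin m → ℕ} (hv : st.val n z = st.val n z')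
    (hl : vlen z = vlen z' + l) (hpos : 0 < l) (hn : st.R * t < n) : t < vlen z' := by
  have h := (st.rel hv hl).1
  have h1 := st.S_le z'
  have h2 : n ≤ n * l := Nat.le_mul_of_pos_right n hpos
  by_contra hcon
  have h3 : st.R * vlen z' ≤ st.R * t := Nat.mul_le_mul_left _ (by omega)
  omega

theorem extract {n N : ℕ} {z z' : Fin m → ℕ} (h : st.Conn n N z z') (hne : vlen z ≠ vlen z') :
    ∃ a b : Fin m → ℕ, vlen a = vlen z ∧ vlen b ≠ vlen z ∧ st.val n a = st.val n z ∧
      st.val n b = st.val n z ∧ fdist a b ≤ N := by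
  induction h using Relation.ReflTransGen.head_induction_on with
  | refl => exact absurd rfl hne
  | head h1 _ ih =>
    rename_i a c _hh
    by_cases hac : vlen c = vlen a
    · obtain ⟨x, y, e1, e2, e3, e4, e5⟩ := ih (by omega)
      exact ⟨x, y, by omega, by omega, by rw [e3, h1.1], by rw [e4, h1.1], e5⟩
    · exact ⟨a, c, rfl, hac, rfl, h1.1.symm, h1.2⟩

/-- All pairs of factorizations are `N`-connected. -/
def Full (n N : ℕ) : Prop := ∀ z z' : Fin m → ℕ, st.val n z = st.val n z' → st.Conn n N z z'

theorem low {n N t : ℕ} (hF : st.Full n N) (hc : Nat.Coprime n st.d) (hn : st.R * t < n) :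
    t + 1 + st.d ≤ N := by
  have hR := st.hR
  have hv : st.val n (Pi.single st.i0 (n + st.R)) = st.val n (Pi.single st.iR n) := by
    simp only [val, vlen_single, S_single, st.hs0, st.hsR]; ring
  obtain ⟨a, b, e1, e2, e3, e4, e5⟩ := st.extract (hF _ _ hv) (by
    rw [vlen_single, vlen_single]; omega)
  rw [← e1] at e2
  rw [← e3] at e4
  obtain ⟨w, p, q, rfl, rfl, hp, hq⟩ := fdist_decomp a b
  have hpq : st.val n q = st.val n p := by
    rw [val_add, val_add] at e4; omega
  rw [vlen_add, vlen_add] at e2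
  rcases lt_or_gt_of_ne e2 with h | h
  · have hl : vlen p = vlen q + (vlen p - vlen q) := by omega
    have h1 := Nat.le_of_dvd (by omega) (st.dvd_l hc hpq.symm hl)
    have h2 := st.len_lower hpq.symm hl (by omega) hn
    omega
  · have hl : vlen q = vlen p + (vlen q - vlen p) := by omega
    have h1 := Nat.le_of_dvd (by omega) (st.dvd_l hc hpq hl)
    have h2 := st.len_lower hpq hl (by omega) hn
    omega

theorem share {n N : ℕ} (hN : st.R + 1 ≤ N) {z z' z1 z1' e : Fin m → ℕ}
    (h : st.Hom z (z1 + e)) (h' : st.Hom z' (z1' + e)) (hc : st.Conn n N z1 z1') :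
    st.Conn n N z z' :=
  (st.hom_conn n N hN _ z _ rfl h).trans
    ((hc.add e).trans (st.hom_conn n N hN _ z' _ rfl h').symm)

theorem share_val {n : ℕ} {z z' z1 z1' e : Fin m → ℕ} (hv : st.val n z = st.val n z')
    (h : st.Hom z (z1 + e)) (h' : st.Hom z' (z1' + e)) : st.val n z1 = st.val n z1' := by
  have h1 := h.val n
  have h2 := h'.val n
  rw [val_add] at h1 h2
  omega

theorem d_pos : 0 < st.d := by
  have h := st.hd st.iR
  rw [st.hsR] at h
  exact Nat.pos_of_dvd_of_pos h st.hR

/-- It suffices to connect the irreducible pairs. -/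
theorem irr {n N : ℕ} (hn : st.R * st.R < n) (hc : Nat.Coprime n st.d) (hN : st.R + 1 ≤ N)
    (H : ∀ z z' : Fin m → ℕ, st.val n z = st.val n z' → vlen z = vlen z' + st.d →
      st.S z < st.R * st.R → st.T z' < st.R * st.R → st.Conn n N z z') : st.Full n N := by
  have main : ∀ (L : ℕ) (z z' : Fin m → ℕ), vlen z = L → vlen z' ≤ vlen z →
      st.val n z = st.val n z' → st.Conn n N z z' := by
    intro L
    induction L using Nat.strong_induction_on with
    | _ L ih =>
    intro z z' hL hle hv
    obtain ⟨l, hl⟩ := Nat.exists_eq_add_of_le hle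
    obtain ⟨hS, hT⟩ := st.rel hv hl
    have hd := st.d_pos
    rcases Nat.eq_zero_or_pos l with h0 | hpos
    · subst h0
      exact st.hom_conn n N hN _ z z' rfl ⟨by omega, by omega⟩
    have hnl : n ≤ n * l := Nat.le_mul_of_pos_right n hpos
    have hnl' : n ≤ (n + st.R) * l := by rw [add_mul]; omega
    have h0 : ∀ x y : Fin m → ℕ, st.val n x = st.val n y → vlen y ≤ vlen x → vlen x ≤ L →
        st.R * st.R ≤ st.T x → st.R * st.R ≤ st.T y → st.Conn n N x y := by
      intro x y hxy hle hxL hx hy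
      obtain ⟨x1, hx1⟩ := st.pull0 x 1 (by omega) one_pos
      obtain ⟨y1, hy1⟩ := st.pull0 y 1 (by omega) one_pos
      have e1 := hx1.1
      have e2 := hy1.1
      rw [vlen_add, vlen_single] at e1 e2
      exact st.share hN hx1 hy1 (ih (vlen x1) (by omega) x1 y1 rfl (by omega)
        (st.share_val hxy hx1 hy1))
    have hR : ∀ x y : Fin m → ℕ, st.val n x = st.val n y → vlen y ≤ vlen x → vlen x ≤ L →
        st.R * st.R ≤ st.S x → st.R * st.R ≤ st.S y → st.Conn n N x y := by
      intro x y hxy hle hxL hx hy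
      obtain ⟨x1, hx1⟩ := st.pullR x 1 (by omega) one_pos
      obtain ⟨y1, hy1⟩ := st.pullR y 1 (by omega) one_pos
      have e1 := hx1.1
      have e2 := hy1.1
      rw [vlen_add, vlen_single] at e1 e2
      exact st.share hN hx1 hy1 (ih (vlen x1) (by omega) x1 y1 rfl (by omega)
        (st.share_val hxy hx1 hy1))
    have hdl := Nat.le_of_dvd hpos (st.dvd_l hc hv hl)
    rcases hdl.eq_or_lt with h | hlt
    · subst h
      by_cases c1 : st.S z < st.R * st.R
      · by_cases c2 : st.T z' < st.R * st.R
        · exact H z z' hv hl c1 c2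
        · exact h0 z z' hv hle (by omega) (by omega) (by omega)
      · exact hR z z' hv hle (by omega) (by omega) (by omega)
    · obtain ⟨j, rfl⟩ := Nat.exists_eq_add_of_lt hlt
      have hST := st.S_T z
      obtain ⟨y, hy1, hy2⟩ := st.fill (vlen z' + (j + 1)) (st.S z + n * st.d)
        (dvd_add (st.dvd_S z) (Dvd.intro_left _ rfl))
        (by have : n ≤ n * st.d := Nat.le_mul_of_pos_right n hd
            omega)
        (by
          have e1 : st.R * vlen z = st.R * (vlen z' + (j + 1)) + st.R * st.d := by
            rw [hl]; ring
          have e2 : (n + st.R) * (st.d + j + 1) = n * st.d + st.R * st.d + (n + st.R) * (j + 1) := by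
            ring
          have e3 : n ≤ (n + st.R) * (j + 1) := by nlinarith
          omega)
      have hyv : st.val n y = st.val n z := by
        unfold val
        rw [hy1, hy2, hl]; ring
      have hzv : st.val n y = st.val n z' := hyv.trans hv
      obtain ⟨r1, r2⟩ := st.rel hzv hy1
      have e3 : n ≤ (n + st.R) * (j + 1) := by nlinarith
      have e4 : n ≤ n * st.d := Nat.le_mul_of_pos_right n hd
      exact (h0 z y hyv.symm (by omega) (by omega) (by omega) (by omega)).trans
        (hR y z' hzv (by omega) (by omega) (by omega) (by omega))
  intro z z' hv
  rcases le_total (vlen z') (vlen z) with h | h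
  · exact main _ z z' rfl h hv
  · exact (main _ z' z rfl h hv.symm).symm

theorem step {n N : ℕ} (hn : st.R * st.R < n) (hc : Nat.Coprime n st.d) {z z' : Fin m → ℕ}
    (hv : st.val n z = st.val n z') (hl : vlen z = vlen z' + st.d)
    (hS : st.S z < st.R * st.R) (hT : st.T z' < st.R * st.R) (hconn : st.Conn n N z z') :
    ∃ w p q : Fin m → ℕ, st.Hom z (w + p) ∧ st.Hom z' (w + q) ∧ vlen p ≤ N ∧ vlen q ≤ N := by
  have hd := st.d_pos
  obtain ⟨a, b, e1, e2, e3, e4, e5⟩ := st.extract hconn (by omega)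
  have hSa : st.S a = st.S z := by
    unfold val at e3; rw [e1] at e3; omega
  have hab : st.val n a = st.val n b := e3.trans e4.symm
  have hlt : vlen b < vlen a := by
    by_contra hcon
    have hl' : vlen b = vlen a + (vlen b - vlen a) := by omega
    have h1 := (st.rel hab.symm hl').1
    have h2 : n ≤ n * (vlen b - vlen a) := Nat.le_mul_of_pos_right n (by omega)
    omega
  have hl' : vlen a = vlen b + (vlen a - vlen b) := by omega
  have hdvd := Nat.le_of_dvd (by omega) (st.dvd_l hc hab hl')
  have hge : vlen z' ≤ vlen b := by
    by_contra hcon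
    have hl2 : vlen z' = vlen b + (vlen z' - vlen b) := by omega
    have h1 := (st.rel (hv.symm.trans e4.symm) hl2).2
    have h2 : n ≤ (n + st.R) * (vlen z' - vlen b) := by
      have := Nat.le_mul_of_pos_right (n + st.R) (show 0 < vlen z' - vlen b by omega)
      omega
    omega
  have hb : vlen z' = vlen b := by omega
  have hSb : st.S z' = st.S b := by
    have h := hv.symm.trans e4.symm
    unfold val at h; rw [hb] at h; omega
  obtain ⟨w, p, q, rfl, rfl, hp, hq⟩ := fdist_decomp a b
  exact ⟨w, p, q, ⟨e1.symm, hSa.symm⟩, ⟨hb, hSb⟩, hp.trans e5, hq.trans e5⟩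

theorem nonempty {n : ℕ} (hn : st.R * st.R < n) (hc : Nat.Coprime n st.d) :
    ∃ N, st.Full n N := by
  refine ⟨n * st.d + 2 * (st.R * st.R) + st.d + st.R + 1, st.irr hn hc (by omega) ?_⟩
  intro z z' hv hl hS hT
  obtain ⟨h1, h2⟩ := st.rel hv hl
  have h3 := st.S_T z'
  have h4 : vlen z' ≤ st.R * vlen z' := Nat.le_mul_of_pos_left _ st.hR
  have := Conn.step (st := st) (n := n) (N := n * st.d + 2 * (st.R * st.R) + st.d + st.R + 1)
    0 z z' hv (by omega) (by omega)
  simpa using this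

/-- Pull a nonhomogeneous relation of `M_{n+R}` back to `M_n`. -/
theorem pullback {n : ℕ} (hn : st.R * st.R < n) {z z' : Fin m → ℕ}
    (hv : st.val (n + st.R) z = st.val (n + st.R) z') (hl : vlen z = vlen z' + st.d) :
    ∃ x x' : Fin m → ℕ, st.Hom z (x + Pi.single st.i0 st.d) ∧
      st.Hom z' (x' + Pi.single st.iR st.d) ∧ st.val n x = st.val n x' := by
  have hd := st.d_pos
  obtain ⟨h1, h2⟩ := st.rel hv hl
  have e1 : n ≤ n * st.d := Nat.le_mul_of_pos_right n hd
  obtain ⟨x, hx⟩ := st.pull0 z st.d (by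
    have : (n + st.R + st.R) * st.d = n * st.d + 2 * (st.R * st.d) := by ring
    omega) hd
  obtain ⟨x', hx'⟩ := st.pullR z' st.d (by
    have : (n + st.R) * st.d = n * st.d + st.R * st.d := by ring
    omega) hd
  refine ⟨x, x', hx, hx', ?_⟩
  obtain ⟨a1, a2⟩ := hx
  obtain ⟨b1, b2⟩ := hx'
  rw [vlen_add, vlen_single] at a1 b1
  rw [S_add, S_single, st.hs0, mul_zero, add_zero] at a2
  rw [S_add, S_single, st.hsR] at b2
  unfold val
  have e2 : vlen x = vlen x' + st.d := by omega
  rw [e2]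
  have e3 : (n + st.R) * st.d = n * st.d + st.d * st.R := by ring
  rw [mul_add]
  omega

theorem pushforward {n : ℕ} {x x' : Fin m → ℕ} (hv : st.val n x = st.val n x')
    (hl : vlen x = vlen x' + st.d) :
    st.val (n + st.R) (x + Pi.single st.i0 st.d) = st.val (n + st.R) (x' + Pi.single st.iR st.d) := by
  obtain ⟨h1, -⟩ := st.rel hv hl
  simp only [val, vlen_add, vlen_single, S_add, S_single, st.hs0, st.hsR]
  rw [hl, h1]; ring

theorem up {n N : ℕ} (hn : st.R * st.R < n) (hc : Nat.Coprime n st.d)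
    (hc' : Nat.Coprime (n + st.R) st.d) (hF : st.Full n N) : st.Full (n + st.R) (N + st.d) := by
  have hlow := st.low hF hc hn
  refine st.irr (by omega) hc' (by omega) ?_
  intro z z' hv hl hS hT
  obtain ⟨x, x', hx, hx', hxv⟩ := st.pullback hn hv hl
  have a1 := hx.1
  have a2 := hx.2
  have b1 := hx'.1
  have b2 := hx'.T
  rw [vlen_add, vlen_single] at a1 b1
  rw [S_add, S_single, st.hs0, mul_zero, add_zero] at a2
  rw [T_add, T_single, st.hsR, Nat.sub_self, mul_zero, add_zero] at b2
  have hxl : vlen x = vlen x' + st.d := by omega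
  obtain ⟨w, p, q, k1, k2, k3, k4⟩ := st.step hn hc hxv hxl (by omega) (by omega) (hF x x' hxv)
  have pv : st.val n p = st.val n q := by
    have e1 := k1.val n
    have e2 := k2.val n
    rw [val_add] at e1 e2
    omega
  have pl : vlen p = vlen q + st.d := by
    have e1 := k1.1
    have e2 := k2.1
    rw [vlen_add] at e1 e2
    omega
  have hstep := Conn.step (st := st) (n := n + st.R) (N := N + st.d) w _ _ (st.pushforward pv pl)
    (by rw [vlen_add, vlen_single]; omega) (by rw [vlen_add, vlen_single]; omega)
  have g1 : st.Hom z (w + (p + Pi.single st.i0 st.d)) := by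
    refine hx.trans ⟨?_, ?_⟩
    · have := k1.1; simp only [vlen_add] at this ⊢; omega
    · have := k1.2; simp only [S_add] at this ⊢; omega
  have g2 : st.Hom z' (w + (q + Pi.single st.iR st.d)) := by
    refine hx'.trans ⟨?_, ?_⟩
    · have := k2.1; simp only [vlen_add] at this ⊢; omega
    · have := k2.2; simp only [S_add] at this ⊢; omega
  exact (st.hom_conn _ _ (by omega) _ z _ rfl g1).trans
    (hstep.trans (st.hom_conn _ _ (by omega) _ z' _ rfl g2).symm)

theorem down {n N : ℕ} (hn : st.R * st.R < n) (hc : Nat.Coprime n st.d)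
    (hc' : Nat.Coprime (n + st.R) st.d) (hF : st.Full (n + st.R) (N + st.d)) : st.Full n N := by
  have hlow := st.low (t := st.R + 1) hF hc' (by rw [mul_add]; omega)
  refine st.irr hn hc (by omega) ?_
  intro z z' hv hl hS hT
  have hv' := st.pushforward hv hl
  obtain ⟨w, p, q, k1, k2, k3, k4⟩ := st.step (by omega) hc' hv'
    (by simp only [vlen_add, vlen_single]; omega)
    (by rw [S_add, S_single, st.hs0]; omega)
    (by rw [T_add, T_single, st.hsR, Nat.sub_self]; omega) (hF _ _ hv')
  have pv : st.val (n + st.R) p = st.val (n + st.R) q := by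
    have e1 := k1.val (n + st.R)
    have e2 := k2.val (n + st.R)
    rw [val_add _ _ w] at e1 e2
    omega
  have pl : vlen p = vlen q + st.d := by
    have e1 := k1.1
    have e2 := k2.1
    simp only [vlen_add, vlen_single] at e1 e2
    omega
  obtain ⟨x, x', hx, hx', hxv⟩ := st.pullback hn pv pl
  have g1 : st.Hom z (w + x) := by
    constructor
    · have := k1.1; have := hx.1; simp only [vlen_add] at *; omega
    · have := k1.2; have := hx.2; simp only [S_add] at *; omega
  have g2 : st.Hom z' (w + x') := by
    constructor
    · have := k2.1; have := hx'.1; simp only [vlen_add] at *; omega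
    · have := k2.2; have := hx'.2; simp only [S_add] at *; omega
  have a1 := hx.1
  have b1 := hx'.1
  rw [vlen_add, vlen_single] at a1 b1
  have hstep := Conn.step (st := st) (n := n) (N := N) w x x' hxv (by omega) (by omega)
  exact (st.hom_conn _ _ (by omega) _ z _ rfl g1).trans
    (hstep.trans (st.hom_conn _ _ (by omega) _ z' _ rfl g2).symm)

end Setup

theorem gcd_bezout {ι : Type*} [DecidableEq ι] (t : Finset ι) (r : ι → ℕ) :
    ∃ c : ι → ℤ, ∑ i ∈ t, c i * r i = (t.gcd r : ℕ) := by
  induction t using Finset.induction_on with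
  | empty => exact ⟨0, by simp⟩
  | insert a t ha ih =>
    obtain ⟨c, hc⟩ := ih
    refine ⟨fun i => if i = a then Nat.gcdA (r a) (t.gcd r) else Nat.gcdB (r a) (t.gcd r) * c i, ?_⟩
    rw [Finset.sum_insert ha, Finset.gcd_insert]
    have h1 : ∑ i ∈ t, (if i = a then Nat.gcdA (r a) (t.gcd r)
        else Nat.gcdB (r a) (t.gcd r) * c i) * (r i : ℤ)
        = Nat.gcdB (r a) (t.gcd r) * ∑ i ∈ t, c i * r i := by
      rw [Finset.mul_sum]
      refine Finset.sum_congr rfl fun i hi => ?_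
      have : i ≠ a := fun h => ha (h ▸ hi)
      simp only [this, if_false]; ring
    rw [h1, hc]
    simp only [if_true]
    have := Nat.gcd_eq_gcd_ab (r a) (t.gcd r)
    have e : (GCDMonoid.gcd (r a) (t.gcd r)) = Nat.gcd (r a) (t.gcd r) := rfl
    rw [e, this]; ring

/-- The setup attached to the statement. -/
def theSetup (k : ℕ) (r : Fin (k + 1) → ℕ) (hmono : StrictMono r) (hpos : 0 < r 0) :
    Setup (k + 2) where
  s := Fin.cons 0 r
  R := r (Fin.last k)
  d := Finset.univ.gcd r
  i0 := 0
  iR := Fin.last (k + 1)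
  hs0 := rfl
  hsR := by rw [← Fin.succ_last, Fin.cons_succ]
  hle := by
    intro i
    refine Fin.cases ?_ (fun j => ?_) i
    · simp
    · simpa using hmono.monotone (Fin.le_last j)
  hR := lt_of_lt_of_le hpos (hmono.monotone (Fin.zero_le _))
  hd := by
    intro i
    refine Fin.cases ?_ (fun j => ?_) i
    · simp
    · simpa using Finset.gcd_dvd (Finset.mem_univ j)
  hb := by
    have hR : 0 < r (Fin.last k) := lt_of_lt_of_le hpos (hmono.monotone (Fin.zero_le _))
    obtain ⟨c, hc⟩ := gcd_bezout Finset.univ r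
    refine ⟨Fin.cons 0 (fun i => (c i % (r (Fin.last k) : ℤ)).toNat), ?_⟩
    rw [Fin.sum_univ_succ]
    simp only [Fin.cons_zero, Fin.cons_succ, zero_mul, zero_add]
    rw [← Int.natCast_modEq_iff, ← hc]
    push_cast
    refine Int.ModEq.sum fun i _ => ?_
    refine Int.ModEq.mul_right _ ?_
    rw [Int.toNat_of_nonneg (Int.emod_nonneg _ (by omega))]
    exact Int.mod_modEq _ _

theorem val_eq (k n : ℕ) (r : Fin (k + 1) → ℕ) (hmono : StrictMono r) (hpos : 0 < r 0)
    (z : Fin (k + 2) → ℕ) : (theSetup k r hmono hpos).val n z = piM k n r z := by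
  unfold Setup.val Setup.S piM vlen theSetup
  simp only [Fin.sum_univ_succ (n := k + 1), Fin.cons_zero, Fin.cons_succ, mul_add, mul_zero, zero_add,
    Finset.sum_add_distrib, Finset.mul_sum]
  simp only [mul_comm n]
  ring

theorem mem_catSet (k n N : ℕ) (r : Fin (k + 1) → ℕ) (hmono : StrictMono r) (hpos : 0 < r 0) :
    N ∈ catSet k n r ↔ (theSetup k r hmono hpos).Full n N := by
  constructor
  · intro h z z' hv
    rw [val_eq, val_eq] at hv
    obtain ⟨L, a, h0, hL, hval, hd⟩ := h z z' hv
    have : ∀ i : Fin (L + 1), (theSetup k r hmono hpos).Conn n N z (a i) := by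
      intro i
      induction i using Fin.induction with
      | zero => rw [h0]; exact Relation.ReflTransGen.refl
      | succ i ih =>
        refine Relation.ReflTransGen.tail ih ⟨?_, hd i⟩
        rw [val_eq, val_eq, hval, hval]
    rw [← hL]; exact this _
  · intro h z z' hv
    have hc := h z z' (by rw [val_eq, val_eq, hv])
    clear hv
    induction hc with
    | refl => exact ⟨0, fun _ => z, rfl, rfl, fun _ => rfl, fun i => i.elim0⟩
    | tail _ h2 ih =>
      rename_i b c _
      obtain ⟨L, a, h0, hL, hval, hd⟩ := ih
      have h3 := h2.1
      rw [val_eq, val_eq] at h3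
      have hcv : piM k n r c = piM k n r z := by rw [← h3, ← hL, hval]
      refine ⟨L + 1, Fin.snoc (α := fun _ => Fin (k + 2) → ℕ) a c, ?_, ?_, ?_, ?_⟩
      · rw [← Fin.castSucc_zero, Fin.snoc_castSucc, h0]
      · rw [Fin.snoc_last]
      · intro i
        refine Fin.lastCases ?_ (fun j => ?_) i
        · rw [Fin.snoc_last, hcv]
        · rw [Fin.snoc_castSucc, hval]
      · intro i
        refine Fin.lastCases ?_ (fun j => ?_) i
        · rw [Fin.succ_last, Fin.snoc_last, Fin.snoc_castSucc, hL]; exact h2.2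
        · rw [Fin.succ_castSucc, Fin.snoc_castSucc, Fin.snoc_castSucc]; exact hd j

theorem coprime_of_primitive (k n : ℕ) (r : Fin (k + 1) → ℕ) (h : Primitive k n r) :
    Nat.Coprime n (Finset.univ.gcd r) := by
  unfold Primitive at h
  have h1 : Nat.gcd n (Finset.univ.gcd r) ∣
      Nat.gcd n (Finset.univ.gcd fun i : Fin (k + 1) => n + r i) := by
    refine Nat.dvd_gcd (Nat.gcd_dvd_left _ _) (Finset.dvd_gcd fun i _ => ?_)
    exact dvd_add (Nat.gcd_dvd_left _ _)
      ((Nat.gcd_dvd_right _ _).trans (Finset.gcd_dvd (Finset.mem_univ i)))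
  rw [h] at h1
  exact Nat.dvd_one.mp h1

end Shift

/-- For `n > r_k²` with `M_n` and `M_{n+r_k}` primitive,
`c(M_{n+r_k}) = c(M_n) + d` where `d = gcd(r_1,...,r_k)`. -/
theorem stmt14 (k n : ℕ) (r : Fin (k + 1) → ℕ) (hmono : StrictMono r) (hpos : 0 < r 0)
    (hn : r (Fin.last k) ^ 2 < n)
    (hprim : Primitive k n r) (hprim' : Primitive k (n + r (Fin.last k)) r) :
    sInf (catSet k (n + r (Fin.last k)) r) = sInf (catSet k n r) + Finset.univ.gcd r := by
  let st := Shift.theSetup k r hmono hpos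
  have hc : Nat.Coprime n st.d := Shift.coprime_of_primitive k n r hprim
  have hc' : Nat.Coprime (n + st.R) st.d := Shift.coprime_of_primitive k _ r hprim'
  have hn' : st.R * st.R < n := by rw [← sq]; exact hn
  obtain ⟨N0, hN0⟩ := st.nonempty hn' hc
  have hmem := fun n N => Shift.mem_catSet k n N r hmono hpos
  have hne : (catSet k n r).Nonempty := ⟨N0, (hmem n N0).mpr hN0⟩
  have hup := st.up hn' hc hc' ((hmem n _).mp (Nat.sInf_mem hne))
  have hupm : sInf (catSet k n r) + Finset.univ.gcd r ∈ catSet k (n + r (Fin.last k)) r :=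
    (hmem _ _).mpr hup
  apply le_antisymm (Nat.sInf_le hupm)
  have h1 := Nat.sInf_mem (⟨_, hupm⟩ : (catSet k (n + r (Fin.last k)) r).Nonempty)
  have h2 : st.Full (n + st.R) (sInf (catSet k (n + r (Fin.last k)) r)) := (hmem _ _).mp h1
  have h3 := st.low (t := 0) h2 hc' (by omega)
  obtain ⟨N, hN⟩ : ∃ N, sInf (catSet k (n + r (Fin.last k)) r) = N + st.d :=
    ⟨_, (Nat.sub_add_cancel (by omega)).symm⟩
  rw [hN] at h2 ⊢
  have h4 := st.down hn' hc hc' h2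
  exact Nat.add_le_add_right (Nat.sInf_le ((hmem n N).mpr h4)) _
end
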